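/- arXiv:1808.04948 — 2 statements merged into one kernel-verified Lean document; each statement's English description precedes it below -/
import Mathlib

section
/- Asymptotically almost surely, the number of subtrees of a uniformly random labelled tree on n vertices is at least 1.37135^n; that is, the probability that c(𝒯_n) ≥ 1.37135^n tends to 1 as n → ∞. -/
open Filter Topology

/-- The number of subtrees of a graph `G` on `Fin n`: the number of (nonempty) vertex
subsets inducing a connected subgraph. -/
noncomputable def subtreeCount {n : ℕ} (G : SimpleGraph (Fin n)) : ℕ :=
  Nat.card {S : Set (Fin n) // (G.induce S).Connected}

/-- The probability that a uniformly random labelled tree on `n` vertices satisfies `p`. -/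
noncomputable def treeProb (n : ℕ) (p : SimpleGraph (Fin n) → Prop) : ℝ :=
  (Nat.card {G : SimpleGraph (Fin n) // G.IsTree ∧ p G} : ℝ) /
    (Nat.card {G : SimpleGraph (Fin n) // G.IsTree} : ℝ)

/-!
A tree on `Fin n` rooted at a vertex `r` is the same thing as its parent map, so every event for
random trees becomes an event for random maps `Fin n → Fin n`. Pitman's count of rooted forests,
built up by repeatedly attaching the root of one component to a vertex of another, shows that there
are at least `n ^ (n - 2)` trees. Hence an event of probability `ε` for a uniformly random map
has probability at most `n ^ 2 * ε` for a uniformly random tree, and exponential tails survive the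
passage from maps to trees.

If `ℓ x` denotes the length of the longest pendant path starting at `x`, then cutting off, for each
`x` independently, an initial segment of this path leaves a subtree, and different cuts leave
different subtrees. So there are at least `∏ x, (1 + ℓ x)` subtrees, and the logarithm of this
product is the sum over `k` of `#{x | k + 1 ≤ ℓ x} * log (1 + 1 / (k + 1))`. For a random map,
`k + 1 ≤ ℓ x` has probability about `e ^ (-(k + 1))`. Altering one value of the map changes the
truncation of the sum to `k < K` by at most `2 * K`, so by the bounded differences inequality this
truncation is close to its mean outside an event of exponentially small probability. Three terms are
enough for the constant `1.37135`.
-/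

open Finset Function Real
open scoped BigOperators

section BoundedDifferences

theorem expect_exp_mul_le_of_expect_eq_zero {α : Type*} [Fintype α] [Nonempty α] {X : α → ℝ}
    {c : ℝ} (hX : 𝔼 a, X a = 0) (hc : ∀ a, |X a| ≤ c) (t : ℝ) :
    𝔼 a, exp (t * X a) ≤ exp ((t * c) ^ 2 / 2) := by
  have hc₀ : 0 ≤ c := (abs_nonneg _).trans (hc (Classical.arbitrary α))
  have pointwise (a : α) : exp (t * X a) ≤ cosh (t * c) + sinh (t * c) / c * X a := by
    rcases hc₀.eq_or_lt with rfl | hpos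
    · simp [abs_nonpos_iff.mp (hc a)]
    · have hle : |X a / c| ≤ 1 := by
        rw [abs_div, abs_of_pos hpos, div_le_one hpos]
        exact hc a
      calc exp (t * X a) = exp (X a / c * (t * c)) := by congr 1; field_simp
        _ ≤ cosh (t * c) + X a / c * sinh (t * c) := exp_mul_le_cosh_add_mul_sinh hle _
        _ = cosh (t * c) + sinh (t * c) / c * X a := by ring
  calc 𝔼 a, exp (t * X a) ≤ 𝔼 a, (cosh (t * c) + sinh (t * c) / c * X a) :=
        expect_le_expect fun a _ => pointwise a
    _ = cosh (t * c) := by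
        rw [expect_add_distrib, ← mul_expect, hX, Fintype.expect_const, mul_zero, add_zero]
    _ ≤ exp ((t * c) ^ 2 / 2) := cosh_le_exp_half_sq _

theorem expect_pi_cons {m : ℕ} {α : Fin (m + 1) → Type*} [∀ i, Fintype (α i)]
    (G : (∀ i, α i) → ℝ) :
    𝔼 f, G f = 𝔼 a : α 0, 𝔼 g : ∀ i : Fin m, α i.succ, G (Fin.cons a g) := by
  rw [← expect_product', univ_product_univ]
  exact (Fintype.expect_equiv (Fin.consEquiv α) _ _ fun _ => rfl).symm

theorem abs_expect_sub_le {α : Type*} [Fintype α] [Nonempty α] {X : α → ℝ} {x c : ℝ}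
    (h : ∀ a, |X a - x| ≤ c) : |𝔼 a, X a - x| ≤ c := by
  rw [← Fintype.expect_const (ι := α) x, ← expect_sub_distrib]
  exact (abs_expect_le _ _).trans (expect_le univ_nonempty fun a _ => h a)

theorem expect_exp_mul_expect_sub_le {m : ℕ} {α : Fin m → Type*} [∀ i, Fintype (α i)]
    [∀ i, Nonempty (α i)] {F : (∀ i, α i) → ℝ} {c : Fin m → ℝ}
    (hF : ∀ f i a, |F (update f i a) - F f| ≤ c i) (t : ℝ) :
    𝔼 f, exp (t * (𝔼 g, F g - F f)) ≤ exp (t ^ 2 * (∑ i, c i ^ 2) / 2) := by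
  induction m with
  | zero => simp
  | succ m ih =>
    set Y : α 0 → ℝ := fun a => 𝔼 g : ∀ i : Fin m, α i.succ, F (Fin.cons a g)
    have hmean : 𝔼 f, F f = 𝔼 a, Y a := expect_pi_cons F
    have hY (a : α 0) : |𝔼 a', Y a' - Y a| ≤ c 0 := by
      refine abs_expect_sub_le fun a' => ?_
      rw [← expect_sub_distrib]
      refine (abs_expect_le _ _).trans (expect_le univ_nonempty fun g _ => ?_)
      simpa only [Fin.update_cons_zero] using hF (Fin.cons a g) 0 a'
    have inner (a : α 0) :
        𝔼 g : ∀ i : Fin m, α i.succ, exp (t * (Y a - F (Fin.cons a g))) ≤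
          exp (t ^ 2 * (∑ i : Fin m, c i.succ ^ 2) / 2) :=
      ih fun g i b => by simpa only [Fin.cons_update] using hF (Fin.cons a g) i.succ b
    have outer : 𝔼 a, exp (t * (𝔼 a', Y a' - Y a)) ≤ exp ((t * c 0) ^ 2 / 2) :=
      expect_exp_mul_le_of_expect_eq_zero
        (by rw [expect_sub_distrib, Fintype.expect_const, sub_self]) hY t
    calc 𝔼 f, exp (t * (𝔼 g, F g - F f))
        = 𝔼 a, exp (t * (𝔼 a', Y a' - Y a)) *
            𝔼 g : ∀ i : Fin m, α i.succ, exp (t * (Y a - F (Fin.cons a g))) := by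
          rw [expect_pi_cons, hmean]
          refine expect_congr rfl fun a _ => ?_
          rw [mul_expect]
          refine expect_congr rfl fun g _ => ?_
          rw [← exp_add]
          ring_nf
      _ ≤ 𝔼 a, exp (t * (𝔼 a', Y a' - Y a)) * exp (t ^ 2 * (∑ i : Fin m, c i.succ ^ 2) / 2) :=
          expect_le_expect fun a _ => mul_le_mul_of_nonneg_left (inner a) (exp_nonneg _)
      _ ≤ exp ((t * c 0) ^ 2 / 2) * exp (t ^ 2 * (∑ i : Fin m, c i.succ ^ 2) / 2) := by
          rw [← expect_mul]
          gcongr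
      _ = exp (t ^ 2 * (∑ i, c i ^ 2) / 2) := by
          rw [← exp_add, Fin.sum_univ_succ]
          ring_nf

theorem card_filter_le_expect_sub_le {m : ℕ} {α : Fin m → Type*} [∀ i, Fintype (α i)]
    [∀ i, Nonempty (α i)] {F : (∀ i, α i) → ℝ} {c : Fin m → ℝ}
    (hF : ∀ f i a, |F (update f i a) - F f| ≤ c i) {s : ℝ} (hs : 0 ≤ s) :
    (#{f | F f ≤ 𝔼 g, F g - s} : ℝ) ≤
      Fintype.card (∀ i, α i) * exp (-s ^ 2 / (2 * ∑ i, c i ^ 2)) := by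
  set C := ∑ i, c i ^ 2
  have markov : #{f | F f ≤ 𝔼 g, F g - s} * exp (s / C * s) ≤
      Fintype.card (∀ i, α i) * exp ((s / C) ^ 2 * C / 2) := by
    calc (#{f | F f ≤ 𝔼 g, F g - s} : ℝ) * exp (s / C * s)
        ≤ ∑ f with F f ≤ 𝔼 g, F g - s, exp (s / C * (𝔼 g, F g - F f)) := by
          rw [← nsmul_eq_mul]
          refine card_nsmul_le_sum _ _ _ fun f hf => ?_
          have hfs : s ≤ 𝔼 g, F g - F f := le_sub_comm.mp (mem_filter.mp hf).2
          gcongr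
      _ ≤ ∑ f, exp (s / C * (𝔼 g, F g - F f)) :=
          sum_le_univ_sum_of_nonneg fun f => exp_nonneg _
      _ ≤ Fintype.card (∀ i, α i) * exp ((s / C) ^ 2 * C / 2) := by
          rw [← Fintype.card_mul_expect]
          gcongr
          exact expect_exp_mul_expect_sub_le hF _
  have exponent : (s / C) ^ 2 * C / 2 - s / C * s = -s ^ 2 / (2 * C) := by
    rcases eq_or_ne C 0 with hC | hC
    · simp [hC]
    · field_simp
      ring
  rwa [← le_div_iff₀ (exp_pos _), mul_div_assoc, ← exp_sub, exponent] at markov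

end BoundedDifferences

section ForestMaps

variable {V : Type*}

/-- A map all of whose orbits end in a fixed point, read as the parent map of a rooted forest on
`V` whose roots are the fixed points. -/
def IsForestMap (f : V → V) : Prop :=
  ∀ x, ∃ m, IsFixedPt f (f^[m] x)

theorem eq_of_isFixedPt_iterate {f : V → V} {x : V} {l m : ℕ} (hl : IsFixedPt f (f^[l] x))
    (hm : IsFixedPt f (f^[m] x)) : f^[l] x = f^[m] x := by
  rw [← hl.iterate m, ← hm.iterate l, ← iterate_add_apply, ← iterate_add_apply, add_comm]

variable [DecidableEq V]

theorem iterate_update_of_forall_lt_ne {f : V → V} {r v x : V} {m : ℕ}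
    (h : ∀ j < m, f^[j] x ≠ r) : (update f r v)^[m] x = f^[m] x := by
  induction m with
  | zero => rfl
  | succ m ih =>
    rw [iterate_succ_apply', iterate_succ_apply', ih fun j hj => h j (hj.trans m.lt_succ_self),
      update_of_ne (h m m.lt_succ_self)]

theorem IsForestMap.update {f : V → V} (hf : IsForestMap f) {r v : V}
    (hv : ∀ m, f^[m] v ≠ r) : IsForestMap (update f r v) := by
  have avoiding {x : V} (hx : ∀ m, f^[m] x ≠ r) :
      ∃ m, IsFixedPt (Function.update f r v) ((Function.update f r v)^[m] x) := by
    obtain ⟨m, hm⟩ := hf x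
    refine ⟨m, ?_⟩
    rw [iterate_update_of_forall_lt_ne fun j _ => hx j]
    exact (update_of_ne (hx m) _ _).trans hm
  intro x
  by_cases hx : ∃ m, f^[m] x = r
  · obtain ⟨m, hm⟩ := avoiding hv
    refine ⟨m + (Nat.find hx + 1), ?_⟩
    rwa [iterate_add_apply, iterate_succ_apply',
      iterate_update_of_forall_lt_ne fun _ hj => Nat.find_min hx hj, Nat.find_spec hx, update_self]
  · exact avoiding (not_exists.mp hx)

variable [Fintype V]

theorem filter_isFixedPt_update {f : V → V} {r v : V} (hvr : v ≠ r) :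
    ({x | IsFixedPt (update f r v) x} : Finset V) = ({x | IsFixedPt f x} : Finset V).erase r := by
  ext x
  simp only [mem_filter_univ, mem_erase]
  rcases eq_or_ne x r with rfl | hx
  · simp [IsFixedPt, hvr]
  · simp [IsFixedPt, hx]

variable (V) in
open Classical in
/-- The parent maps of the rooted forests on `V` with exactly `k` components. -/
noncomputable def forestMaps (k : ℕ) : Finset (V → V) :=
  {f | IsForestMap f ∧ #{x | IsFixedPt f x} = k}

theorem mem_forestMaps {k : ℕ} {f : V → V} :
    f ∈ forestMaps V k ↔ IsForestMap f ∧ #{x | IsFixedPt f x} = k := by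
  simp [forestMaps]

theorem update_mem_forestMaps {k : ℕ} {f : V → V} (hf : f ∈ forestMaps V (k + 1)) {r v : V}
    (hr : IsFixedPt f r) (hv : ∀ m, f^[m] v ≠ r) : update f r v ∈ forestMaps V k := by
  obtain ⟨hforest, hroots⟩ := mem_forestMaps.mp hf
  refine mem_forestMaps.mpr ⟨hforest.update hv, ?_⟩
  rw [filter_isFixedPt_update (show v ≠ r from hv 0),
    card_erase_of_mem (mem_filter.mpr ⟨mem_univ _, hr⟩), hroots, Nat.add_sub_cancel]

/-- Pitman's grafting relation: the root `r` of one component of `f` is attached to a vertex `v`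
of another component. -/
def IsGraft (f g : V → V) : Prop :=
  ∃ r v, IsFixedPt f r ∧ (∀ m, f^[m] v ≠ r) ∧ g = update f r v

open Classical in
theorem mul_card_le_card_isGraft {k : ℕ} {f : V → V} (hf : f ∈ forestMaps V (k + 1)) :
    Fintype.card V * k ≤ #((forestMaps V k).bipartiteAbove IsGraft f) := by
  obtain ⟨hforest, hroots⟩ := mem_forestMaps.mp hf
  set otherRoots : V → Finset V := fun v => {r | IsFixedPt f r ∧ ∀ m, f^[m] v ≠ r}
  have card_otherRoots (v : V) : k ≤ #(otherRoots v) := by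
    obtain ⟨l, hl⟩ := hforest v
    rw [← Nat.add_sub_cancel (n := k) (m := 1), ← hroots,
      ← card_erase_of_mem (mem_filter.mpr ⟨mem_univ _, hl⟩)]
    refine card_le_card fun r hr => ?_
    obtain ⟨hne, hr⟩ := mem_erase.mp hr
    refine mem_filter.mpr ⟨mem_univ _, (mem_filter.mp hr).2, ?_⟩
    rintro m rfl
    exact hne (eq_of_isFixedPt_iterate (mem_filter.mp hr).2 hl)
  calc Fintype.card V * k = ∑ _v : V, k := by rw [sum_const, card_univ, smul_eq_mul]
    _ ≤ ∑ v, #(otherRoots v) := sum_le_sum fun v _ => card_otherRoots v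
    _ = #(univ.sigma otherRoots) := (card_sigma _ _).symm
    _ ≤ _ := by
      refine card_le_card_of_injOn (fun p => update f p.2 p.1) ?_ ?_
      · rintro ⟨v, r⟩ hp
        obtain ⟨hr, hv⟩ := (mem_filter.mp (mem_sigma.mp hp).2).2
        exact mem_filter.mpr ⟨update_mem_forestMaps hf hr hv, r, v, hr, hv, rfl⟩
      · rintro ⟨v, r⟩ hp ⟨v', r'⟩ hp' heq
        obtain ⟨hr, hv⟩ := (mem_filter.mp (mem_sigma.mp hp).2).2
        obtain rfl : r = r' := by
          by_contra hne
          have := congrFun heq r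
          simp only [update_self, update_of_ne hne] at this
          exact hv 0 (this.trans hr)
        simpa using congrFun heq r

open Classical in
theorem card_isGraft_le {k : ℕ} {g : V → V} (hg : g ∈ forestMaps V k) :
    #((forestMaps V (k + 1)).bipartiteBelow IsGraft g) ≤ Fintype.card V - k := by
  obtain ⟨-, hroots⟩ := mem_forestMaps.mp hg
  calc #((forestMaps V (k + 1)).bipartiteBelow IsGraft g)
      ≤ #(({x | IsFixedPt g x} : Finset V)ᶜ.image fun r => update g r r) := by
        refine card_le_card fun f hf => ?_
        obtain ⟨r, v, hr, hv, rfl⟩ := (mem_filter.mp hf).2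
        refine mem_image.mpr ⟨r, ?_, ?_⟩
        · refine mem_compl.mpr fun h => hv 0 ?_
          simpa [IsFixedPt] using (mem_filter.mp h).2
        · rw [update_idem, update_eq_self_iff]
          exact hr.symm
    _ ≤ #({x | IsFixedPt g x} : Finset V)ᶜ := card_image_le
    _ = Fintype.card V - k := by rw [card_compl, hroots]

theorem card_forestMaps_succ_mul_le (k : ℕ) :
    #(forestMaps V (k + 1)) * (Fintype.card V * k) ≤ #(forestMaps V k) * (Fintype.card V - k) := by
  classical
  exact card_mul_le_card_mul IsGraft (fun f hf => mul_card_le_card_isGraft hf)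
    (fun g hg => card_isGraft_le hg)

theorem choose_mul_pow_le_card_forestMaps (j : ℕ) :
    (Fintype.card V - 1).choose j * Fintype.card V ^ j ≤
      #(forestMaps V (Fintype.card V - j)) := by
  set n := Fintype.card V
  induction j with
  | zero =>
    have hid : id ∈ forestMaps V n :=
      mem_forestMaps.mpr ⟨fun x => ⟨0, rfl⟩, by simp [IsFixedPt, n]⟩
    simpa using card_pos.mpr ⟨id, hid⟩
  | succ j ih =>
    rcases le_or_gt n (j + 1) with hj | hj
    · simp [Nat.choose_eq_zero_of_lt (show n - 1 < j + 1 by omega)]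
    refine Nat.le_of_mul_le_mul_right ?_ j.succ_pos
    calc (n - 1).choose (j + 1) * n ^ (j + 1) * (j + 1)
        = (n - 1).choose j * n ^ j * (n * (n - (j + 1))) := by
          rw [mul_right_comm, Nat.choose_succ_right_eq, Nat.sub_sub, add_comm 1 j, pow_succ]
          ring
      _ ≤ #(forestMaps V (n - j)) * (n * (n - (j + 1))) := Nat.mul_le_mul_right _ ih
      _ ≤ #(forestMaps V (n - (j + 1))) * (j + 1) := by
          have := card_forestMaps_succ_mul_le (V := V) (n - (j + 1))
          rwa [show n - (j + 1) + 1 = n - j by omega, Nat.sub_sub_self hj.le] at this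

theorem pow_card_sub_one_le_card_forestMaps_one [Nonempty V] :
    Fintype.card V ^ (Fintype.card V - 1) ≤ #(forestMaps V 1) := by
  have := choose_mul_pow_le_card_forestMaps (V := V) (Fintype.card V - 1)
  rwa [Nat.choose_self, one_mul, Nat.sub_sub_self Fintype.card_pos] at this
end ForestMaps

section ParentMaps

variable {V : Type*} {f g : V → V} {r : V}

/-- `f` is the parent map of a tree on `V` rooted at `r`: the root is its own parent, and iterating
`f` leads from every vertex to the root. -/
def IsParentMap (f : V → V) (r : V) : Prop :=
  IsFixedPt f r ∧ ∀ x, ∃ m, f^[m] x = r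

/-- The graph joining every vertex to its image under `f`; loops are dropped. For a parent map this
is the tree it describes. -/
def parentGraph (f : V → V) : SimpleGraph V :=
  SimpleGraph.fromRel fun x y => f x = y

theorem parentGraph_adj {x y : V} :
    (parentGraph f).Adj x y ↔ x ≠ y ∧ (f x = y ∨ f y = x) :=
  SimpleGraph.fromRel_adj _ _ _

theorem IsParentMap.connected_induce_parentGraph (hf : IsParentMap f r) {S : Set V} (hr : r ∈ S)
    (hS : Set.MapsTo f S S) : ((parentGraph f).induce S).Connected := by
  have reachable_root (m : ℕ) :
      ∀ x : S, f^[m] x = r → ((parentGraph f).induce S).Reachable x ⟨r, hr⟩ := by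
    induction m with
    | zero =>
      intro x hx
      exact (Subtype.ext hx : x = ⟨r, hr⟩) ▸ SimpleGraph.Reachable.rfl
    | succ m ih =>
      intro x hx
      have tail := ih ⟨f x, hS x.2⟩ hx
      by_cases hfx : (x : V) = f x
      · exact (Subtype.ext hfx : x = ⟨f x, hS x.2⟩) ▸ tail
      · have head : ((parentGraph f).induce S).Adj x ⟨f x, hS x.2⟩ :=
          parentGraph_adj.mpr ⟨hfx, .inl rfl⟩
        exact head.reachable.trans tail
  have root_reachable (x : S) : ((parentGraph f).induce S).Reachable x ⟨r, hr⟩ :=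
    let ⟨m, hm⟩ := hf.2 x
    reachable_root m x hm
  have : Nonempty S := ⟨⟨r, hr⟩⟩
  exact ⟨fun x y => (root_reachable x).trans (root_reachable y).symm⟩

theorem IsParentMap.connected_parentGraph (hf : IsParentMap f r) : (parentGraph f).Connected :=
  (SimpleGraph.induceUnivIso (parentGraph f)).connected_iff.mp <|
    hf.connected_induce_parentGraph (Set.mem_univ r) (Set.mapsTo_univ f _)

theorem IsParentMap.eq_root_of_isPeriodicPt (hf : IsParentMap f r) {x : V} {n : ℕ} (hn : 0 < n)
    (hx : IsPeriodicPt f n x) : x = r := by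
  obtain ⟨m, hm⟩ := hf.2 x
  calc x = f^[n * m] x := (hx.mul_const m).symm
    _ = r := by
      obtain ⟨l, hl⟩ := Nat.exists_eq_add_of_le' (Nat.le_mul_of_pos_left m hn)
      rw [hl, iterate_add_apply, hm, hf.1.iterate l]

/-- A vertex at which two parent maps disagree would have to be mapped by `g` to a child with
respect to `f`, hence disagreement propagates from every vertex to its parent, up to the root. -/
theorem IsParentMap.eq_of_parentGraph_le (hf : IsParentMap f r) (hg : IsFixedPt g r)
    (hle : parentGraph f ≤ parentGraph g) : f = g := by
  have propagate {x : V} (hx : f x ≠ g x) : f (f x) ≠ g (f x) := by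
    have not_periodic {n : ℕ} (hn : 0 < n) : ¬ IsPeriodicPt f n x := fun h =>
      hx (by rw [hf.eq_root_of_isPeriodicPt hn h, hf.1, hg])
    have hadj : (parentGraph g).Adj x (f x) :=
      hle (parentGraph_adj.mpr ⟨fun h => not_periodic one_pos h.symm, .inl rfl⟩)
    have hchild : g (f x) = x := (parentGraph_adj.mp hadj).2.resolve_left (Ne.symm hx)
    rw [hchild]
    exact not_periodic two_pos
  have never (m : ℕ) {x : V} (hx : f x ≠ g x) : f (f^[m] x) ≠ g (f^[m] x) := by
    induction m generalizing x with
    | zero => exact hx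
    | succ _ ih => exact ih (propagate hx)
  funext x
  by_contra hx
  obtain ⟨m, hm⟩ := hf.2 x
  exact never m hx (by rw [hm, hf.1, hg])

theorem exists_adj_dist_lt {G : SimpleGraph V} (hG : G.Connected) {x : V} (hx : x ≠ r) :
    ∃ y, G.Adj x y ∧ G.dist y r < G.dist x r := by
  obtain ⟨p, hp⟩ := hG.exists_walk_length_eq_dist x r
  cases p with
  | nil => exact absurd rfl hx
  | cons hadj q =>
    refine ⟨_, hadj, ?_⟩
    rw [← hp, SimpleGraph.Walk.length_cons]
    exact Nat.lt_succ_of_le (SimpleGraph.dist_le q)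

theorem exists_isParentMap_parentGraph_le {G : SimpleGraph V} (hG : G.Connected) (r : V) :
    ∃ f, IsParentMap f r ∧ parentGraph f ≤ G := by
  choose! f hadj hlt using fun x (hx : x ≠ r) => exists_adj_dist_lt hG hx
  classical
  set f' := update f r r
  have hroot : f' r = r := update_self r r f
  have hf' {x : V} (hx : x ≠ r) : f' x = f x := update_of_ne hx r f
  have reaches_root (m : ℕ) : ∀ x, G.dist x r ≤ m → f'^[m] x = r := by
    induction m with
    | zero => exact fun x hx => hG.dist_eq_zero_iff.mp (Nat.le_zero.mp hx)
    | succ m ih =>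
      intro x hx
      refine ih (f' x) ?_
      rcases eq_or_ne x r with rfl | hxr
      · simp [hroot]
      · rw [hf' hxr]
        exact Nat.le_of_lt_succ ((hlt x hxr).trans_le hx)
  refine ⟨f', ⟨hroot, fun x => ⟨_, reaches_root _ x le_rfl⟩⟩, fun x y hxy => ?_⟩
  have adj_of_ne {z : V} (hz : z ≠ f' z) : G.Adj z (f' z) := by
    have hzr : z ≠ r := fun h => hz (by rw [h, hroot])
    exact hf' hzr ▸ hadj z hzr
  obtain ⟨hne, rfl | rfl⟩ := parentGraph_adj.mp hxy
  · exact adj_of_ne hne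
  · exact (adj_of_ne hne.symm).symm

theorem IsParentMap.isTree_parentGraph (hf : IsParentMap f r) :
    (parentGraph f).IsTree := by
  obtain ⟨T, hTf, hT⟩ := hf.connected_parentGraph.exists_isTree_le
  obtain ⟨g, hg, hgT⟩ := exists_isParentMap_parentGraph_le hT.connected r
  obtain rfl : g = f := hg.eq_of_parentGraph_le hf.1 (hgT.trans hTf)
  rwa [hgT.antisymm hTf]

theorem bijOn_parentGraph (r : V) :
    Set.BijOn parentGraph {f : V → V | IsParentMap f r} {G | G.IsTree} := by
  refine ⟨fun f hf => hf.isTree_parentGraph, fun f hf g hg h => ?_, fun G hG => ?_⟩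
  · exact IsParentMap.eq_of_parentGraph_le hf hg.1 h.le
  · obtain ⟨f, hf, hfG⟩ := exists_isParentMap_parentGraph_le hG.connected r
    have hmin := SimpleGraph.isTree_iff_minimal_connected.mp hG
    exact ⟨f, hf, hfG.antisymm (hmin.2 hf.connected_parentGraph hfG)⟩

theorem card_pow_sub_one_le_card_mul_card_isTree [Fintype V] [Nonempty V] :
    Fintype.card V ^ (Fintype.card V - 1) ≤
      Fintype.card V * Nat.card {G : SimpleGraph V // G.IsTree} := by
  classical
  have card_eq (r : V) : {f : V → V | IsParentMap f r}.ncard =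
      Nat.card {G : SimpleGraph V // G.IsTree} :=
    Nat.card_congr (bijOn_parentGraph r).equiv
  have one_root : (forestMaps V 1 : Set (V → V)) ⊆ ⋃ r, {f | IsParentMap f r} := by
    intro f hf
    obtain ⟨hforest, hroots⟩ := mem_forestMaps.mp hf
    obtain ⟨r, hr⟩ := card_eq_one.mp hroots
    have mem_roots {x : V} : IsFixedPt f x ↔ x = r := by
      simpa using Finset.ext_iff.mp hr x
    exact Set.mem_iUnion.mpr ⟨r, mem_roots.mpr rfl, fun x =>
      (hforest x).imp fun m hm => mem_roots.mp hm⟩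
  calc Fintype.card V ^ (Fintype.card V - 1) ≤ #(forestMaps V 1) :=
        pow_card_sub_one_le_card_forestMaps_one
    _ = (forestMaps V 1 : Set (V → V)).ncard := (Set.ncard_coe_finset _).symm
    _ ≤ (⋃ r, {f : V → V | IsParentMap f r}).ncard := Set.ncard_le_ncard one_root
    _ ≤ ∑ r, {f : V → V | IsParentMap f r}.ncard := Set.ncard_iUnion_le_of_fintype _
    _ = Fintype.card V * Nat.card {G : SimpleGraph V // G.IsTree} := by
      simp only [card_eq, sum_const, card_univ, smul_eq_mul]

theorem card_isTree_pos [Finite V] [Nonempty V] :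
    0 < Nat.card {G : SimpleGraph V // G.IsTree} := by
  have := Fintype.ofFinite V
  exact Nat.pos_of_mul_pos_left <|
    (pow_pos Fintype.card_pos _).trans_le card_pow_sub_one_le_card_mul_card_isTree

end ParentMaps

section PendantPaths

variable {V : Type*} {f : V → V}

/-- The first `k` vertices of the orbit of `x` under `f` form a pendant path: `x` has no preimage,
and each of the following `k - 1` vertices has its predecessor in the orbit as only preimage. -/
def IsPendantPath (f : V → V) (k : ℕ) (x : V) : Prop :=
  ∀ j < k, ∀ y, f y = f^[j] x → ∃ i, j = i + 1 ∧ y = f^[i] x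

theorem IsPendantPath.antitone (f : V → V) (x : V) : Antitone fun k => IsPendantPath f k x :=
  fun _ _ hkl h j hj => h j (hj.trans_le hkl)

theorem isPendantPath_zero (f : V → V) (x : V) : IsPendantPath f 0 x :=
  fun _ hj => absurd hj (Nat.not_lt_zero _)

theorem IsPendantPath.exists_eq_iterate {k j m : ℕ} {x y : V} (hx : IsPendantPath f k x)
    (hj : j < k) (h : f^[m] y = f^[j] x) : ∃ i, j = i + m ∧ y = f^[i] x := by
  induction m generalizing y with
  | zero => exact ⟨j, rfl, h⟩
  | succ m ih =>
    obtain ⟨i, rfl, hi⟩ := ih h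
    obtain ⟨i, rfl, hy⟩ := hx i ((Nat.le_add_right i m).trans_lt hj) y hi
    exact ⟨i, by omega, hy⟩

theorem IsPendantPath.eq_and_eq_of_iterate_eq {k l i j : ℕ} {x y : V} (hx : IsPendantPath f k x)
    (hy : IsPendantPath f l y) (hi : i < k) (hj : j < l) (h : f^[i] x = f^[j] y) :
    x = y ∧ i = j := by
  obtain ⟨d, hd, hxd⟩ := hy.exists_eq_iterate hj h
  obtain ⟨e, he, -⟩ := hx.exists_eq_iterate hi h.symm
  obtain rfl : d = 0 := by omega
  exact ⟨hxd, by omega⟩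

theorem IsPendantPath.not_isFixedPt_iterate {k j : ℕ} {x : V} (hx : IsPendantPath f k x)
    (hj : j < k) : ¬ IsFixedPt f (f^[j] x) := by
  intro hfix
  obtain ⟨i, hi, -⟩ := hx.exists_eq_iterate hj (hfix.iterate (j + 1))
  omega

/-- The vertices left after removing, for every `x`, the first `c x` vertices of its orbit: the
subtree obtained by cutting the pendant paths according to `c`. -/
def trim (f : V → V) (c : V → ℕ) : Set V :=
  {y | ∀ x, ∀ j < c x, y ≠ f^[j] x}

theorem mapsTo_trim {c : V → ℕ} (hc : ∀ x, IsPendantPath f (c x) x) :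
    Set.MapsTo f (trim f c) (trim f c) := by
  intro y hy x j hj h
  obtain ⟨i, rfl, hi⟩ := hc x j hj y h
  exact hy x i (Nat.lt_of_succ_lt hj) hi

theorem injOn_trim (f : V → V) : Set.InjOn (trim f) {c | ∀ x, IsPendantPath f (c x) x} := by
  have le_of_trim_eq {c d : V → ℕ} (hc : ∀ x, IsPendantPath f (c x) x)
      (hd : ∀ x, IsPendantPath f (d x) x) (h : trim f c = trim f d) : d ≤ c := by
    intro x
    by_contra! hlt
    have removed : f^[c x] x ∉ trim f c := h ▸ fun hmem => hmem x (c x) hlt rfl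
    simp only [trim, Set.mem_ofPred_eq, not_forall, not_not] at removed
    obtain ⟨y, j, hj, hxy⟩ := removed
    obtain ⟨rfl, rfl⟩ := (hd x).eq_and_eq_of_iterate_eq (hc y) hlt hj hxy
    exact hj.false
  exact fun c hc d hd h => (le_of_trim_eq hd hc h.symm).antisymm (le_of_trim_eq hc hd h)

theorem IsParentMap.connected_induce_trim {r : V} (hf : IsParentMap f r) {c : V → ℕ}
    (hc : ∀ x, IsPendantPath f (c x) x) : ((parentGraph f).induce (trim f c)).Connected := by
  refine hf.connected_induce_parentGraph (r := r) ?_ (mapsTo_trim hc)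
  rintro x j hj rfl
  exact (hc x).not_isFixedPt_iterate hj hf.1

variable [Fintype V]

open Classical in
theorem IsParentMap.prod_card_le_card_connected {r : V} (hf : IsParentMap f r) (K : ℕ) :
    ∏ x, #{k ∈ range (K + 1) | IsPendantPath f k x} ≤
      Nat.card {S : Set V // ((parentGraph f).induce S).Connected} := by
  have hpendant {c : V → ℕ}
      (hc : c ∈ Fintype.piFinset fun x => {k ∈ range (K + 1) | IsPendantPath f k x}) (x : V) :
      IsPendantPath f (c x) x :=
    (mem_filter.mp (Fintype.mem_piFinset.mp hc x)).2
  calc ∏ x, #{k ∈ range (K + 1) | IsPendantPath f k x}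
      = Set.ncard (Fintype.piFinset fun x => {k ∈ range (K + 1) | IsPendantPath f k x} :
          Set (V → ℕ)) := by rw [Set.ncard_coe_finset, Fintype.card_piFinset]
    _ ≤ {S : Set V | ((parentGraph f).induce S).Connected}.ncard :=
        Set.ncard_le_ncard_of_injOn (trim f) (fun c hc => hf.connected_induce_trim (hpendant hc))
          ((injOn_trim f).mono fun c hc => hpendant hc)

open Classical in
theorem log_card_filter_range_succ_of_antitone {P : ℕ → Prop} (hP : Antitone P) (h₀ : P 0)
    (K : ℕ) :
    log #{k ∈ range (K + 1) | P k} =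
      ∑ k ∈ range K, if P (k + 1) then log (1 + 1 / (k + 1)) else 0 := by
  have card_eq (K : ℕ) (hK : P K) : #{k ∈ range (K + 1) | P k} = K + 1 := by
    rw [filter_true_of_mem fun k hk => hP (Nat.lt_succ_iff.mp (mem_range.mp hk)) hK, card_range]
  induction K with
  | zero => rw [card_eq 0 h₀]; simp
  | succ K ih =>
    rw [sum_range_succ, ← ih]
    by_cases hK : P (K + 1)
    · rw [if_pos hK, card_eq _ hK, card_eq _ (hP K.le_succ hK), ← log_mul (by positivity)
        (by positivity)]
      congr 1
      push_cast
      field_simp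
    · rw [if_neg hK, add_zero, range_add_one (n := K + 1), filter_insert, if_neg hK]

open Classical in
/-- The starting vertices of the pendant paths of `f` with `k` vertices; their number is the
statistic that is averaged over random maps. -/
noncomputable def pendantStarts (f : V → V) (k : ℕ) : Finset V :=
  {x | IsPendantPath f k x}

theorem mem_pendantStarts {k : ℕ} {x : V} : x ∈ pendantStarts f k ↔ IsPendantPath f k x := by
  simp [pendantStarts]

/-- The sum over all vertices `x` of `log (1 + ℓ)`, where `ℓ ≤ K` is the number of vertices of the
longest pendant path with at most `K` vertices starting at `x`; the logarithm is split
as `∑ k < ℓ, log (1 + 1 / (k + 1))`. -/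
noncomputable def pendantWeight (K : ℕ) (f : V → V) : ℝ :=
  ∑ k ∈ range K, #(pendantStarts f (k + 1)) * log (1 + 1 / (k + 1))

theorem IsParentMap.exp_pendantWeight_le {r : V} (hf : IsParentMap f r) (K : ℕ) :
    exp (pendantWeight K f) ≤
      Nat.card {S : Set V // ((parentGraph f).induce S).Connected} := by
  classical
  have card_pos (x : V) : 0 < #{k ∈ range (K + 1) | IsPendantPath f k x} :=
    card_pos.mpr ⟨0, by simp [isPendantPath_zero]⟩
  have weight_eq :
      pendantWeight K f = log (∏ x, #{k ∈ range (K + 1) | IsPendantPath f k x} : ℕ) := by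
    rw [Nat.cast_prod, log_prod fun x _ => Nat.cast_ne_zero.mpr (card_pos x).ne']
    simp_rw [log_card_filter_range_succ_of_antitone (IsPendantPath.antitone f _)
      (isPendantPath_zero f _)]
    rw [sum_comm]
    refine sum_congr rfl fun k _ => ?_
    rw [← sum_filter, sum_const, nsmul_eq_mul, pendantStarts]
  rw [weight_eq, exp_log (Nat.cast_pos.mpr (prod_pos fun x _ => card_pos x))]
  exact_mod_cast hf.prod_card_le_card_connected K

variable [DecidableEq V]

theorem card_filter_pendantStarts_exists_mem_le (f : V → V) (k : ℕ) (Z : Finset V) :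
    #{x ∈ pendantStarts f k | ∃ j < k, f^[j] x ∈ Z} ≤ k * #Z := by
  calc #{x ∈ pendantStarts f k | ∃ j < k, f^[j] x ∈ Z} ≤ #(range k ×ˢ Z) := by
        refine card_le_card_of_forall_subsingleton (fun x p => f^[p.1] x = p.2) ?_ ?_
        · intro x hx
          obtain ⟨j, hj, hjZ⟩ := (mem_filter.mp hx).2
          exact ⟨(j, f^[j] x), mk_mem_product (mem_range.mpr hj) hjZ, rfl⟩
        · rintro ⟨j, z⟩ hp x ⟨hx, hxz⟩ y ⟨hy, hyz⟩
          have hj : j < k := mem_range.mp (mem_product.mp hp).1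
          exact ((mem_pendantStarts.mp (mem_filter.mp hx).1).eq_and_eq_of_iterate_eq
            (mem_pendantStarts.mp (mem_filter.mp hy).1) hj hj (hxz.trans hyz.symm)).1
    _ = k * #Z := by rw [card_product, card_range]

omit [Fintype V] in
theorem IsPendantPath.update {k : ℕ} {x v w : V} (hx : IsPendantPath f k x)
    (hv : ∀ j < k, f^[j] x ≠ v) (hw : ∀ j < k, f^[j] x ≠ w) :
    IsPendantPath (update f v w) k x := by
  have iterate_eq {j : ℕ} (hj : j < k) : (Function.update f v w)^[j] x = f^[j] x :=
    iterate_update_of_forall_lt_ne fun i hi => hv i (hi.trans hj)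
  intro j hj y hy
  rw [iterate_eq hj] at hy
  have hyv : y ≠ v := by
    rintro rfl
    exact hw j hj (by rw [← hy, update_self])
  rw [update_of_ne hyv] at hy
  obtain ⟨i, rfl, rfl⟩ := hx j hj y hy
  exact ⟨i, rfl, (iterate_eq (Nat.lt_of_succ_lt hj)).symm⟩

theorem card_pendantStarts_le_update (f : V → V) (k : ℕ) (v w : V) :
    #(pendantStarts f k) ≤ #(pendantStarts (update f v w) k) + k * 2 := by
  calc #(pendantStarts f k)
      ≤ #(pendantStarts (update f v w) k ∪
          {x ∈ pendantStarts f k | ∃ j < k, f^[j] x ∈ ({v, w} : Finset V)}) := by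
        refine card_le_card fun x hx => ?_
        by_cases hmeets : ∃ j < k, f^[j] x ∈ ({v, w} : Finset V)
        · exact mem_union_right _ (mem_filter.mpr ⟨hx, hmeets⟩)
        · simp only [mem_insert, mem_singleton, not_exists, not_and, not_or] at hmeets
          exact mem_union_left _ (mem_pendantStarts.mpr ((mem_pendantStarts.mp hx).update
            (fun j hj => (hmeets j hj).1) fun j hj => (hmeets j hj).2))
    _ ≤ #(pendantStarts (update f v w) k) + k * #{v, w} :=
        (card_union_le _ _).trans
          (Nat.add_le_add_left (card_filter_pendantStarts_exists_mem_le f k _) _)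
    _ ≤ #(pendantStarts (update f v w) k) + k * 2 := by
        gcongr
        exact card_le_two

theorem log_one_add_one_div_nonneg (k : ℕ) : 0 ≤ log (1 + 1 / ((k : ℝ) + 1)) :=
  log_nonneg (le_add_of_nonneg_right (by positivity))

theorem log_one_add_one_div_le (k : ℕ) : log (1 + 1 / ((k : ℝ) + 1)) ≤ 1 / (k + 1) := by
  simpa using log_le_sub_one_of_pos (x := 1 + 1 / ((k : ℝ) + 1)) (by positivity)

theorem abs_pendantWeight_update_sub_le (K : ℕ) (f : V → V) (v w : V) :
    |pendantWeight K (update f v w) - pendantWeight K f| ≤ 2 * K := by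
  have abs_card_sub_le (k : ℕ) :
      |(#(pendantStarts (update f v w) k) : ℝ) - #(pendantStarts f k)| ≤ k * 2 := by
    have hle := card_pendantStarts_le_update f k v w
    have hge := card_pendantStarts_le_update (update f v w) k v (f v)
    rw [update_idem, update_eq_self] at hge
    rw [abs_sub_le_iff, sub_le_iff_le_add', sub_le_iff_le_add']
    exact_mod_cast And.intro hge hle
  calc |pendantWeight K (update f v w) - pendantWeight K f|
      = |∑ k ∈ range K, ((#(pendantStarts (update f v w) (k + 1)) : ℝ) -
          #(pendantStarts f (k + 1))) * log (1 + 1 / (k + 1))| := by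
        simp only [pendantWeight, ← sum_sub_distrib, ← sub_mul]
    _ ≤ ∑ k ∈ range K, ((k + 1 : ℕ) * 2) * (1 / ((k : ℝ) + 1)) := by
        refine (abs_sum_le_sum_abs _ _).trans (sum_le_sum fun k _ => ?_)
        rw [abs_mul, abs_of_nonneg (log_one_add_one_div_nonneg k)]
        exact mul_le_mul (abs_card_sub_le _) (log_one_add_one_div_le k)
          (log_one_add_one_div_nonneg k) (by positivity)
    _ = ∑ _k ∈ range K, (2 : ℝ) := by
        refine sum_congr rfl fun k _ => ?_
        push_cast
        field_simp
    _ = 2 * K := by rw [sum_const, card_range, nsmul_eq_mul, mul_comm]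

open Classical in
/-- The maps for which `e 0, …, e k` is a pendant path, the image of `e k` being any vertex outside
the path. -/
noncomputable def mapsWithPendantPath {k : ℕ} (e : Fin (k + 1) ↪ V) : Finset (V → V) :=
  Fintype.piFinset fun y =>
    {z | (∀ i : Fin k, y = e i.castSucc → z = e i.succ) ∧
      ((∀ i : Fin k, y ≠ e i.castSucc) → ∀ i, z ≠ e i)}

theorem mem_mapsWithPendantPath {k : ℕ} {e : Fin (k + 1) ↪ V} :
    f ∈ mapsWithPendantPath e ↔ (∀ i : Fin k, f (e i.castSucc) = e i.succ) ∧
      ∀ y, (∀ i : Fin k, y ≠ e i.castSucc) → ∀ i, f y ≠ e i := by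
  simp only [mapsWithPendantPath, Fintype.mem_piFinset, mem_filter_univ, forall_and]
  exact and_congr_left' ⟨fun h i => h _ i rfl, by rintro h _ i rfl; exact h i⟩

theorem iterate_eq_of_mem_mapsWithPendantPath {k : ℕ} {e : Fin (k + 1) ↪ V}
    (hf : f ∈ mapsWithPendantPath e) (i : Fin (k + 1)) : f^[i] (e 0) = e i := by
  induction i using Fin.induction with
  | zero => rfl
  | succ i ih =>
    rw [Fin.val_succ, iterate_succ_apply', ← Fin.val_castSucc, ih,
      (mem_mapsWithPendantPath.mp hf).1]

theorem isPendantPath_of_mem_mapsWithPendantPath {k : ℕ} {e : Fin (k + 1) ↪ V}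
    (hf : f ∈ mapsWithPendantPath e) : IsPendantPath f (k + 1) (e 0) := by
  intro j hj y hy
  obtain ⟨hsucc, hother⟩ := mem_mapsWithPendantPath.mp hf
  lift j to Fin (k + 1) using hj
  rw [iterate_eq_of_mem_mapsWithPendantPath hf] at hy
  by_cases hpath : ∃ i : Fin k, y = e i.castSucc
  · obtain ⟨i, rfl⟩ := hpath
    rw [hsucc, e.apply_eq_iff_eq] at hy
    exact ⟨i, by rw [← hy, Fin.val_succ],
      (iterate_eq_of_mem_mapsWithPendantPath hf i.castSucc).symm⟩
  · exact absurd hy (hother y (not_exists.mp hpath) j)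

theorem pow_le_card_mapsWithPendantPath {k : ℕ} (e : Fin (k + 1) ↪ V) :
    (Fintype.card V - (k + 1)) ^ (Fintype.card V - k) ≤ #(mapsWithPendantPath e) := by
  classical
  set inner : Finset V := univ.image fun i : Fin k => e i.castSucc
  have mem_inner {y : V} : y ∈ inner ↔ ∃ i : Fin k, y = e i.castSucc := by
    simp [inner, eq_comm]
  have card_inner : #inner = k :=
    (card_image_of_injective _ (e.injective.comp (Fin.castSucc_injective k))).trans (card_fin k)
  have card_outside : #(univ.image e)ᶜ = Fintype.card V - (k + 1) := by
    rw [card_compl, card_image_of_injective _ e.injective, card_univ, Fintype.card_fin]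
  calc (Fintype.card V - (k + 1)) ^ (Fintype.card V - k)
      = ∏ y, if y ∈ inner then 1 else Fintype.card V - (k + 1) := by
        rw [prod_ite, prod_const_one, one_mul, prod_const, ← card_inner, ← card_compl]
        congr 2
        ext y
        simp
    _ ≤ #(mapsWithPendantPath e) := by
        rw [mapsWithPendantPath, Fintype.card_piFinset]
        refine prod_le_prod' fun y _ => ?_
        split_ifs with hy
        · obtain ⟨i, rfl⟩ := mem_inner.mp hy
          refine card_pos.mpr ⟨e i.succ, mem_filter.mpr ⟨mem_univ _, fun j hj => ?_, fun h => ?_⟩⟩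
          · rw [Fin.castSucc_injective k (e.injective hj)]
          · exact absurd rfl (h i)
        · rw [← card_outside]
          refine card_le_card fun z hz =>
            mem_filter.mpr ⟨mem_univ _, fun i hi => ?_, fun _ i hi => ?_⟩
          · exact absurd (mem_inner.mpr ⟨i, hi⟩) hy
          · simp [hi] at hz

theorem mul_pow_le_descFactorial_mul_pow (n k : ℕ) :
    n * (n - (k + 1)) ^ n ≤ n.descFactorial (k + 1) * (n - (k + 1)) ^ (n - k) := by
  rcases le_or_gt n k with hnk | hkn
  · rcases n.eq_zero_or_pos with rfl | hn
    · simp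
    · simp [Nat.sub_eq_zero_of_le (hnk.trans k.le_succ), hn.ne']
  · obtain ⟨m, rfl⟩ : ∃ m, n = m + 1 := ⟨n - 1, by omega⟩
    calc (m + 1) * (m + 1 - (k + 1)) ^ (m + 1)
        = (m + 1) * (m + 1 - (k + 1)) ^ k * (m + 1 - (k + 1)) ^ (m + 1 - k) := by
          rw [mul_assoc, ← pow_add, Nat.add_sub_cancel' hkn.le]
      _ ≤ (m + 1) * (m + 1 - k) ^ k * (m + 1 - (k + 1)) ^ (m + 1 - k) := by
          gcongr
          exact k.le_succ
      _ ≤ (m + 1).descFactorial (k + 1) * (m + 1 - (k + 1)) ^ (m + 1 - k) := by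
          rw [Nat.succ_descFactorial_succ]
          gcongr
          exact Nat.pow_sub_le_descFactorial m k

theorem card_mul_pow_le_sum_card_pendantStarts (k : ℕ) :
    Fintype.card V * (Fintype.card V - (k + 1)) ^ Fintype.card V ≤
      ∑ f : V → V, #(pendantStarts f (k + 1)) := by
  set n := Fintype.card V
  calc n * (n - (k + 1)) ^ n ≤ n.descFactorial (k + 1) * (n - (k + 1)) ^ (n - k) :=
        mul_pow_le_descFactorial_mul_pow n k
    _ = ∑ _e : Fin (k + 1) ↪ V, (n - (k + 1)) ^ (n - k) := by
        rw [sum_const, card_univ, Fintype.card_embedding_eq, Fintype.card_fin, smul_eq_mul]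
    _ ≤ ∑ e : Fin (k + 1) ↪ V, #(mapsWithPendantPath e) :=
        sum_le_sum fun e _ => pow_le_card_mapsWithPendantPath e
    _ = #(univ.sigma (mapsWithPendantPath (V := V) (k := k))) := (card_sigma _ _).symm
    _ ≤ #(univ.sigma fun f : V → V => pendantStarts f (k + 1)) := by
        refine card_le_card_of_injOn (fun p => ⟨p.2, p.1 0⟩) ?_ ?_
        · rintro ⟨e, f⟩ hp
          exact mem_sigma.mpr ⟨mem_univ _, mem_pendantStarts.mpr
            (isPendantPath_of_mem_mapsWithPendantPath (mem_sigma.mp hp).2)⟩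
        · rintro ⟨e, f⟩ hp ⟨e', f'⟩ hp' heq
          obtain ⟨rfl, hzero⟩ := Sigma.mk.inj_iff.mp heq
          have he (i : Fin (k + 1)) : e i = e' i := by
            rw [← iterate_eq_of_mem_mapsWithPendantPath (mem_sigma.mp hp).2,
              ← iterate_eq_of_mem_mapsWithPendantPath (mem_sigma.mp hp').2, eq_of_heq hzero]
          rw [DFunLike.ext e e' he]
    _ = ∑ f : V → V, #(pendantStarts f (k + 1)) := card_sigma _ _

end PendantPaths

section Expectation

variable {V : Type*} [Fintype V] [DecidableEq V] [Nonempty V]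

theorem mul_one_sub_pow_le_expect_card_pendantStarts {k : ℕ} (hk : k + 1 ≤ Fintype.card V) :
    Fintype.card V * (1 - (k + 1) / Fintype.card V : ℝ) ^ Fintype.card V ≤
      𝔼 f : V → V, (#(pendantStarts f (k + 1)) : ℝ) := by
  set n := Fintype.card V
  have hn : (0 : ℝ) < n := Nat.cast_pos.mpr Fintype.card_pos
  have count : (n : ℝ) * (n - (k + 1)) ^ n ≤ ∑ f : V → V, (#(pendantStarts f (k + 1)) : ℝ) := by
    rw [← Nat.cast_succ, ← Nat.cast_sub hk]
    exact_mod_cast card_mul_pow_le_sum_card_pendantStarts (V := V) k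
  rw [Fintype.expect_eq_sum_div_card, Fintype.card_fun, Nat.cast_pow, le_div_iff₀ (by positivity)]
  calc n * (1 - (k + 1) / n : ℝ) ^ n * n ^ n = n * (n - (k + 1) : ℝ) ^ n := by
        rw [mul_assoc, ← mul_pow, sub_mul, div_mul_cancel₀ _ hn.ne', one_mul]
    _ ≤ _ := count

theorem eventually_mul_le_expect_pendantWeight {K : ℕ} {a : ℝ}
    (ha : a < ∑ k ∈ range K, exp (-(k + 1)) * log (1 + 1 / (k + 1))) :
    ∀ᶠ n : ℕ in atTop, a * n ≤ 𝔼 f : Fin n → Fin n, pendantWeight K f := by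
  have lower_bound_tendsto :
      Tendsto (fun n : ℕ => ∑ k ∈ range K, (1 - (k + 1) / n : ℝ) ^ n * log (1 + 1 / (k + 1))) atTop
        (𝓝 (∑ k ∈ range K, exp (-(k + 1)) * log (1 + 1 / (k + 1)))) :=
    tendsto_finsetSum _ fun k _ => by
      simpa only [neg_div, ← sub_eq_add_neg] using
        (tendsto_one_add_div_pow_exp (-(k + 1 : ℝ))).mul_const (log (1 + 1 / (k + 1)))
  filter_upwards [lower_bound_tendsto.eventually_const_le ha, eventually_ge_atTop (K + 1)]
    with n hn hnK
  have : NeZero n := ⟨by omega⟩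
  calc a * n ≤ (∑ k ∈ range K, (1 - (k + 1) / n : ℝ) ^ n * log (1 + 1 / (k + 1))) * n := by gcongr
    _ = ∑ k ∈ range K, n * (1 - (k + 1) / n : ℝ) ^ n * log (1 + 1 / (k + 1)) := by
      rw [sum_mul]
      exact sum_congr rfl fun k _ => by ring
    _ ≤ ∑ k ∈ range K, (𝔼 f : Fin n → Fin n, (#(pendantStarts f (k + 1)) : ℝ)) *
          log (1 + 1 / (k + 1)) := by
      refine sum_le_sum fun k hk => mul_le_mul_of_nonneg_right ?_
        (log_one_add_one_div_nonneg k)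
      have := mem_range.mp hk
      simpa only [Fintype.card_fin] using
        mul_one_sub_pow_le_expect_card_pendantStarts (V := Fin n) (k := k)
          (by rw [Fintype.card_fin]; omega)
    _ = 𝔼 f : Fin n → Fin n, pendantWeight K f := by
      simp only [pendantWeight, expect_sum_comm, expect_mul]

end Expectation

section TreeProb

theorem treeProb_nonneg (n : ℕ) (p : SimpleGraph (Fin n) → Prop) : 0 ≤ treeProb n p := by
  unfold treeProb
  positivity

variable {n : ℕ} [NeZero n]

theorem treeProb_not (p : SimpleGraph (Fin n) → Prop) :
    treeProb n (fun G => ¬ p G) = 1 - treeProb n p := by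
  have hsplit : Nat.card {G : SimpleGraph (Fin n) // G.IsTree ∧ p G} +
      Nat.card {G : SimpleGraph (Fin n) // G.IsTree ∧ ¬ p G} =
        Nat.card {G : SimpleGraph (Fin n) // G.IsTree} :=
    Set.ncard_inter_add_ncard_sdiff_eq_ncard {G : SimpleGraph (Fin n) | G.IsTree} {G | p G}
  have hpos : (Nat.card {G : SimpleGraph (Fin n) // G.IsTree} : ℝ) ≠ 0 :=
    Nat.cast_ne_zero.mpr card_isTree_pos.ne'
  rw [treeProb, treeProb, eq_sub_iff_add_eq, ← add_div, div_eq_one_iff_eq hpos, add_comm]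
  exact_mod_cast hsplit

theorem treeProb_le_of_forall_mem {p : SimpleGraph (Fin n) → Prop} {r : Fin n}
    {S : Finset (Fin n → Fin n)} (hS : ∀ f, IsParentMap f r → p (parentGraph f) → f ∈ S) :
    treeProb n p ≤ n ^ 2 * (#S / n ^ n) := by
  have card_le : Nat.card {G : SimpleGraph (Fin n) // G.IsTree ∧ p G} ≤ #S :=
    calc {G : SimpleGraph (Fin n) | G.IsTree ∧ p G}.ncard
        ≤ (parentGraph '' (S : Set (Fin n → Fin n))).ncard := by
          refine Set.ncard_le_ncard ?_
          rintro G ⟨hG, hpG⟩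
          obtain ⟨f, hf, rfl⟩ := (bijOn_parentGraph r).surjOn hG
          exact ⟨f, hS f hf hpG, rfl⟩
      _ ≤ (S : Set (Fin n → Fin n)).ncard := Set.ncard_image_le
      _ = #S := Set.ncard_coe_finset S
  have pow_le : n ^ n ≤ n ^ 2 * Nat.card {G : SimpleGraph (Fin n) // G.IsTree} := by
    have hcount := card_pow_sub_one_le_card_mul_card_isTree (V := Fin n)
    rw [Fintype.card_fin] at hcount
    calc n ^ n = n * n ^ (n - 1) := (mul_pow_sub_one (NeZero.ne n) n).symm
      _ ≤ n * (n * Nat.card {G : SimpleGraph (Fin n) // G.IsTree}) := by gcongr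
      _ = n ^ 2 * Nat.card {G : SimpleGraph (Fin n) // G.IsTree} := by ring
  have hpos : (0 : ℝ) < Nat.card {G : SimpleGraph (Fin n) // G.IsTree} :=
    Nat.cast_pos.mpr card_isTree_pos
  have hn : (0 : ℝ) < n ^ n := pow_pos (Nat.cast_pos.mpr (NeZero.pos n)) n
  rw [treeProb, ← mul_div_assoc, div_le_div_iff₀ hpos hn, mul_assoc, mul_left_comm]
  exact mul_le_mul (Nat.cast_le.mpr card_le) (by exact_mod_cast pow_le) hn.le (Nat.cast_nonneg _)

theorem card_pendantWeight_le_sub_le (K : ℕ) {s : ℝ} (hs : 0 ≤ s) :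
    (#{f : Fin n → Fin n |
        pendantWeight K f ≤ 𝔼 g : Fin n → Fin n, pendantWeight K g - s * n} : ℝ) ≤
      n ^ n * exp (-(s ^ 2 / (8 * K ^ 2)) * n) := by
  have hvariance : ∑ _i : Fin n, (2 * K : ℝ) ^ 2 = n * (2 * K) ^ 2 := by simp
  have exponent : -(s * n) ^ 2 / (2 * (n * (2 * K) ^ 2)) = -(s ^ 2 / (8 * K ^ 2)) * n := by
    have hn : (n : ℝ) ≠ 0 := NeZero.ne _
    rcases eq_or_ne (K : ℝ) 0 with hK | hK
    · simp [hK]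
    · field_simp
      ring
  have tail := card_filter_le_expect_sub_le (α := fun _ : Fin n => Fin n) (F := pendantWeight K)
    (fun f v w => abs_pendantWeight_update_sub_le K f v w) (mul_nonneg hs n.cast_nonneg)
  rwa [hvariance, exponent, Fintype.card_fun, Fintype.card_fin, Nat.cast_pow] at tail

theorem treeProb_not_exp_mul_le_subtreeCount_le {K : ℕ} {a b : ℝ} (hab : a ≤ b)
    (hb : b * n ≤ 𝔼 f : Fin n → Fin n, pendantWeight K f) :
    treeProb n (fun G => ¬ exp (a * n) ≤ subtreeCount G) ≤
      n ^ 2 * exp (-((b - a) ^ 2 / (8 * K ^ 2)) * n) := by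
  have few_subtrees (f : Fin n → Fin n) (hf : IsParentMap f 0)
      (h : ¬ exp (a * n) ≤ subtreeCount (parentGraph f)) :
      f ∈ ({f | pendantWeight K f ≤ 𝔼 g : Fin n → Fin n, pendantWeight K g - (b - a) * n} :
        Finset (Fin n → Fin n)) := by
    have hweight : pendantWeight K f < a * n :=
      exp_lt_exp.mp ((hf.exp_pendantWeight_le K).trans_lt (not_le.mp h))
    exact mem_filter.mpr ⟨mem_univ _, by linarith⟩
  have hn : (0 : ℝ) < n ^ n := pow_pos (Nat.cast_pos.mpr (NeZero.pos n)) n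
  refine (treeProb_le_of_forall_mem few_subtrees).trans ?_
  gcongr
  rw [div_le_iff₀' hn]
  exact card_pendantWeight_le_sub_le K (sub_nonneg.mpr hab)

end TreeProb

theorem tendsto_treeProb_of_lt_sum {K : ℕ} (hK : 0 < K) {a : ℝ}
    (ha : a < ∑ k ∈ range K, exp (-(k + 1)) * log (1 + 1 / (k + 1))) :
    Tendsto (fun n : ℕ => treeProb n fun G => exp (a * n) ≤ subtreeCount G) atTop (𝓝 1) := by
  obtain ⟨b, hab, hb⟩ := exists_between ha
  set c := (b - a) ^ 2 / (8 * K ^ 2)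
  have hc : 0 < c := div_pos (pow_pos (sub_pos.mpr hab) 2) (by positivity)
  have complement_tendsto :
      Tendsto (fun n : ℕ => treeProb n fun G => ¬ exp (a * n) ≤ subtreeCount G) atTop (𝓝 0) := by
    have bound_tendsto : Tendsto (fun n : ℕ => (n : ℝ) ^ 2 * exp (-c * n)) atTop (𝓝 0) := by
      simpa only [rpow_ofNat, comp_def] using
        (tendsto_rpow_mul_exp_neg_mul_atTop_nhds_zero 2 c hc).comp tendsto_natCast_atTop_atTop
    refine squeeze_zero' (.of_forall fun n => treeProb_nonneg n _) ?_ bound_tendsto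
    filter_upwards [eventually_mul_le_expect_pendantWeight hb, eventually_ne_atTop 0] with n hn hn₀
    have : NeZero n := ⟨hn₀⟩
    exact treeProb_not_exp_mul_le_subtreeCount_le hab.le hn
  have one_sub_tendsto := complement_tendsto.const_sub 1
  rw [sub_zero] at one_sub_tendsto
  refine one_sub_tendsto.congr' ?_
  filter_upwards [eventually_ne_atTop 0] with n hn₀
  have : NeZero n := ⟨hn₀⟩
  rw [treeProb_not, sub_sub_cancel]

theorem summable_exp_neg_mul_log :
    Summable fun k : ℕ => exp (-(k + 1)) * log (1 + 1 / (k + 1)) := by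
  have hsummable : Summable fun k : ℕ => exp (-(k + 1)) := by
    simpa only [Nat.cast_succ] using (summable_nat_add_iff 1).mpr summable_exp_neg_nat
  refine hsummable.of_nonneg_of_le
    (fun k => mul_nonneg (exp_nonneg _) (log_one_add_one_div_nonneg k)) fun k => ?_
  refine mul_le_of_le_one_right (exp_nonneg _) ((log_one_add_one_div_le k).trans ?_)
  exact div_le_one_of_le₀ (le_add_of_nonneg_left k.cast_nonneg) (by positivity)

theorem log_lt_sum_range_three :
    log 1.37135 < ∑ k ∈ range 3, exp (-(k + 1)) * log (1 + 1 / (k + 1)) := by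
  have hexp (k : ℕ) : (11 / 30) ^ (k + 1) ≤ exp (-(k + 1)) := by
    have hbase : 11 / 30 ≤ exp (-1) :=
      (by norm_num : (11 / 30 : ℝ) ≤ 0.36787944116).trans exp_neg_one_gt_d9.le
    calc (11 / 30) ^ (k + 1) ≤ exp (-1) ^ (k + 1) := by gcongr
      _ = exp (-(k + 1)) := by rw [← exp_nat_mul]; push_cast; ring_nf
  -- With the lower bounds `11/30`, `4/30`, `1/30` for `e⁻¹`, `e⁻²`, `e⁻³` the inequality becomes
  -- a comparison of the `30`th powers, which are rational.
  have hpow : 30 * log 1.37135 < 11 * log 2 + 4 * log (3 / 2) + log (4 / 3) := by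
    calc 30 * log 1.37135 = log (1.37135 ^ 30) := by rw [log_pow]; norm_num
      _ < log (2 ^ 11 * (3 / 2) ^ 4 * (4 / 3)) := log_lt_log (by norm_num) (by norm_num)
      _ = 11 * log 2 + 4 * log (3 / 2) + log (4 / 3) := by
        rw [log_mul (by norm_num) (by norm_num), log_mul (by norm_num) (by norm_num), log_pow,
          log_pow]
        norm_num
  calc log 1.37135 < 11 / 30 * log 2 + 4 / 30 * log (3 / 2) + 1 / 30 * log (4 / 3) := by linarith
    _ ≤ ∑ k ∈ range 3, (11 / 30) ^ (k + 1) * log (1 + 1 / (k + 1)) := by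
      simp only [sum_range_succ, range_zero, sum_empty]
      norm_num
      linarith [log_nonneg (show (1 : ℝ) ≤ 3 / 2 by norm_num),
        log_nonneg (show (1 : ℝ) ≤ 4 / 3 by norm_num)]
    _ ≤ ∑ k ∈ range 3, exp (-(k + 1)) * log (1 + 1 / (k + 1)) :=
      sum_le_sum fun k _ =>
        mul_le_mul_of_nonneg_right (hexp k) (log_one_add_one_div_nonneg k)

theorem log_lt_tsum_exp_neg_mul_log :
    log 1.37135 < ∑' k : ℕ, exp (-(k + 1)) * log (1 + 1 / (k + 1)) :=
  log_lt_sum_range_three.trans_le <| summable_exp_neg_mul_log.sum_le_tsum (range 3) fun k _ =>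
    mul_nonneg (exp_nonneg _) (log_one_add_one_div_nonneg k)

theorem aas_subtree_lower_bound_137135_general {a : ℝ}
    (ha : a < ∑' k : ℕ, exp (-(k + 1)) * log (1 + 1 / (k + 1))) :
    Tendsto (fun n : ℕ => treeProb n fun G => exp (a * n) ≤ subtreeCount G) atTop (𝓝 1) := by
  obtain ⟨K, hsum, hK⟩ := ((summable_exp_neg_mul_log.hasSum.tendsto_sum_nat.eventually_const_lt
    ha).and (eventually_gt_atTop 0)).exists
  exact tendsto_treeProb_of_lt_sum hK hsum

/-- A.a.s. the number of subtrees of a uniformly random labelled tree on `n` vertices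
is at least `1.37135 ^ n`. -/
theorem aas_subtree_lower_bound_137135 :
    Tendsto (fun n : ℕ =>
      treeProb n (fun G => (1.37135 : ℝ) ^ n ≤ (subtreeCount G : ℝ)))
      atTop (𝓝 1) := by
  simpa only [mul_comm (log _), exp_nat_mul, exp_log (show (0 : ℝ) < 1.37135 by norm_num)] using
    aas_subtree_lower_bound_137135_general log_lt_tsum_exp_neg_mul_log
end

section
/- Asymptotically almost surely, the number of subtrees of a uniformly random labelled tree on n vertices is at least 1.41805^n; that is, the probability that c(𝒯_n) ≥ 1.41805^n tends to 1 as n → ∞. -/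
/-!
It suffices to count the subtrees that contain a fixed vertex, taken as root. Let `x` be their
number. If a rooted tree arises by joining the root of `a` to the root of `b` (which stays the
root), then `x = (1 + x_a) * x_b`, since a subtree through the root either avoids the branch `a` or
meets it in a subtree through the root of `a`. Cutting off the branch that contains a distinguished
non-root vertex gives a unique such decomposition, hence a recursion for the law of `x` over the
labelled trees with `n` non-root vertices.

For `M = ∑ mean n (x ^ (-s)) z ^ (n + 1)` and `N = ∑ mean n ((1 + x) ^ (-s)) z ^ (n + 1)`, where
`mean n g` is the sum of `g x` over these trees divided by `n!`, the recursion says `M = z exp N`.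
If the partial sums of `M` are at most `1`, those of `N` are at most `1` minus the defect, a partial
sum of `M - N`. As `s → 0` the defect is asymptotic to `s` times the mean of `log (1 + 1 / x)` at
`z = 1 / e`, so for every `c` below a truncation of this mean and small `s > 0` the bound `M ≤ 1`
propagates at `z = exp (-1 + s c)`, and therefore
`mean n (x ^ (-s)) ≤ exp ((1 - s c) (n + 1))`.

The mean of `log (1 + 1 / x)`, truncated to `n < 32`, exceeds `0.349283 > log 1.41805`. For `n < 9`
this uses the exact law of `x`; for larger `n` it uses `log (1 + 1 / x) ≥ 1 / x - 1 / (2 x ^ 2)` and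
bounds for the moments of `1 / x` and `1 / x ^ 2`, which the same recursion provides through
`1 / (1 + x) ≥ 1 / x - 1 / x ^ 2` and `1 / (1 + x) ^ 2 ≤ 1 / x ^ 2`.

Markov's inequality now bounds the number of trees on `n` vertices with fewer than `1.41805 ^ n`
subtrees by `(n - 1)! exp ((1 - δ) n)` with `δ > 0`. There are at least `n ^ (n - 2)` trees, by
Pitman's double counting of rooted forests, so by Stirling's formula the proportion of such trees
tends to zero.
-/

open Filter Topology

namespace SubtreeBound

/-! ### The law of the number of rooted subtrees -/

/-- The law of the number `x` of subtrees through the root, over the labelled trees with `n`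
non-root vertices, as a list of pairs (multiplicity, `x`). The recursion cuts off the branch that
contains a distinguished non-root vertex: if this branch has `i` other vertices, there are
`n.choose i` ways to choose them and `i + 1` ways to choose the root of the branch. -/
def law : ℕ → List (ℕ × ℕ)
  | 0 => [(1, 1)]
  | n + 1 => (List.ofFn fun i : Fin (n + 1) =>
      (law i).flatMap fun p => (law (n - i)).map fun q =>
        (n.choose i * (i + 1) * (p.1 * q.1), (1 + p.2) * q.2)).flatten
termination_by n => n

/-- The sum of `g x` over the labelled trees with `n` non-root vertices, where `x` is the number
of subtrees through the root. -/
def lawSum {R : Type*} [Semiring R] (n : ℕ) (g : ℕ → R) : R :=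
  ((law n).map fun p => p.1 * g p.2).sum

/-- `lawSum n g / n!`, a coefficient of the exponential generating function of `lawSum · g`. -/
def mean {K : Type*} [Field K] (n : ℕ) (g : ℕ → K) : K :=
  lawSum n g / n.factorial

/-- The coefficient of `z ^ (n + 1)` in `A = exp (∑ i, b i * z ^ (i + 1))` in terms of the
previous coefficients `a` of `A`, by comparison of coefficients in
`A' = (∑ i, b i * z ^ (i + 1))' A`. -/
def expCoeffStep {K : Type*} [Field K] (b a : ℕ → K) (n : ℕ) : K :=
  (∑ i ∈ Finset.range (n + 1), (i + 1) * b i * a (n - i)) / (n + 1)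

theorem one_le_of_mem_law {n : ℕ} {p : ℕ × ℕ} (hp : p ∈ law n) : 1 ≤ p.2 := by
  induction n using Nat.strong_induction_on generalizing p with
  | _ n ih =>
    cases n with
    | zero => simp_all [law]
    | succ n =>
      simp only [law, List.mem_flatten, List.mem_ofFn', Set.mem_range] at hp
      obtain ⟨-, ⟨i, rfl⟩, hp⟩ := hp
      obtain ⟨q, -, hp⟩ := List.mem_flatMap.1 hp
      obtain ⟨r, hr, rfl⟩ := List.mem_map.1 hp
      exact Nat.mul_pos (by lia) (ih _ (by lia) hr)

section Semiring

variable {R : Type*}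

@[simp]
theorem lawSum_zero [Semiring R] (g : ℕ → R) : lawSum 0 g = g 1 := by
  simp [lawSum, law]

theorem lawSum_mul_left [CommSemiring R] (n : ℕ) (c : R) (g : ℕ → R) :
    lawSum n (fun x => c * g x) = c * lawSum n g := by
  simp only [lawSum, mul_left_comm _ c, List.sum_map_mul_left]

theorem lawSum_add_one [CommSemiring R] (n : ℕ) (g : ℕ → R) :
    lawSum (n + 1) g = ∑ i ∈ Finset.range (n + 1),
      n.choose i * (i + 1) * lawSum i fun x => lawSum (n - i) fun y => g ((1 + x) * y) := by
  rw [Finset.sum_range, lawSum, law, List.map_flatten, List.sum_flatten, List.map_ofFn,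
    List.map_ofFn, List.sum_ofFn]
  refine Finset.sum_congr rfl fun i _ => ?_
  simp only [lawSum, Function.comp_apply, List.flatMap_def, List.map_flatten, List.map_map,
    List.sum_flatten, Function.comp_def, ← List.sum_map_mul_left]
  push_cast
  simp only [mul_assoc, mul_left_comm, mul_comm]

end Semiring

section Field

variable {K : Type*} [Field K]

@[simp]
theorem mean_zero (g : ℕ → K) : mean 0 g = g 1 := by
  simp [mean]

theorem mean_mul_left (n : ℕ) (c : K) (g : ℕ → K) :
    mean n (fun x => c * g x) = c * mean n g := by
  rw [mean, lawSum_mul_left, mul_div_assoc, mean]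

theorem mean_sub (n : ℕ) (f g : ℕ → K) : mean n (fun x => f x - g x) = mean n f - mean n g := by
  have (l : List (ℕ × ℕ)) : (l.map fun p => p.1 * (f p.2 - g p.2)).sum =
      (l.map fun p => p.1 * f p.2).sum - (l.map fun p => p.1 * g p.2).sum := by
    induction l with
    | nil => simp
    | cons p l ih => simp only [List.map_cons, List.sum_cons, ih]; ring
  rw [mean, lawSum, this, sub_div]
  rfl

theorem mean_add_one [CharZero K] (n : ℕ) {g : ℕ → K} (hg : ∀ x y, g (x * y) = g x * g y) :
    mean (n + 1) g =
      expCoeffStep (fun i => mean i fun x => g (1 + x)) (fun j => mean j g) n := by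
  rw [mean, lawSum_add_one, expCoeffStep, Nat.factorial_succ, Nat.cast_mul,
    div_mul_eq_div_div_swap, Finset.sum_div]
  congr 1
  · refine Finset.sum_congr rfl fun i hi => ?_
    have h_choose := Nat.choose_mul_factorial_mul_factorial (Finset.mem_range_succ_iff.1 hi)
    have h_factor : (lawSum i fun x => lawSum (n - i) fun y => g ((1 + x) * y)) =
        lawSum (n - i) g * lawSum i fun x => g (1 + x) := by
      simp only [hg, lawSum_mul_left, mul_comm _ (lawSum (n - i) g)]
    rw [h_factor, mean, mean, ← h_choose]
    have hi_ne : (i.factorial : K) ≠ 0 := by exact_mod_cast i.factorial_ne_zero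
    have hni_ne : ((n - i).factorial : K) ≠ 0 := by exact_mod_cast (n - i).factorial_ne_zero
    have h_choose_ne : (n.choose i : K) ≠ 0 := by
      exact_mod_cast (Nat.choose_pos (Finset.mem_range_succ_iff.1 hi)).ne'
    push_cast
    field_simp
  · push_cast
    rfl

end Field

theorem cast_mean (n : ℕ) (g : ℕ → ℚ) : ((mean n g : ℚ) : ℝ) = mean n fun x => (g x : ℝ) := by
  simp [mean, lawSum, Rat.cast_list_sum, Function.comp_def]

section Order

variable {K : Type*} [Field K] [LinearOrder K] [IsStrictOrderedRing K]

theorem mean_mono {n : ℕ} {f g : ℕ → K} (h : ∀ x, 1 ≤ x → f x ≤ g x) : mean n f ≤ mean n g := by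
  unfold mean lawSum
  gcongr
  exact List.sum_le_sum fun _ hp =>
    mul_le_mul_of_nonneg_left (h _ (one_le_of_mem_law hp)) (Nat.cast_nonneg _)

theorem mean_nonneg {n : ℕ} {g : ℕ → K} (h : ∀ x, 1 ≤ x → 0 ≤ g x) : 0 ≤ mean n g := by
  simpa [mean, lawSum] using mean_mono (n := n) (f := 0) h

theorem expCoeffStep_mono {a a' b b' : ℕ → K} {n : ℕ} (hb₀ : ∀ i ≤ n, 0 ≤ b i)
    (hb : ∀ i ≤ n, b i ≤ b' i) (ha₀ : ∀ i ≤ n, 0 ≤ a i) (ha : ∀ i ≤ n, a i ≤ a' i) :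
    expCoeffStep b a n ≤ expCoeffStep b' a' n := by
  unfold expCoeffStep
  gcongr with i hi
  all_goals have hi := Finset.mem_range_succ_iff.1 hi
  · exact ha₀ _ (n.sub_le i)
  · exact mul_nonneg (by positivity) ((hb₀ i hi).trans (hb i hi))
  · exact hb i hi
  · exact ha _ (n.sub_le i)

end Order

theorem tendsto_mean {α : Type*} {l : Filter α} {n : ℕ} {g : α → ℕ → ℝ} {h : ℕ → ℝ}
    (hg : ∀ x, 1 ≤ x → Tendsto (g · x) l (𝓝 (h x))) :
    Tendsto (fun a => mean n (g a)) l (𝓝 (mean n h)) :=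
  (tendsto_list_sum _ fun _ hp => (hg _ (one_le_of_mem_law hp)).const_mul _).div_const _

/-! ### Truncated exponential generating functions -/

theorem le_mul_exp_of_deriv_le {P P' Q Q' : ℝ → ℝ} (hP : ∀ z, HasDerivAt P (P' z) z)
    (hQ : ∀ z, HasDerivAt Q (Q' z) z) (hle : ∀ z, 0 < z → Q' z ≤ P' z * Q z) {z : ℝ} (hz : 0 ≤ z) :
    Q z ≤ Q 0 * Real.exp (P z - P 0) := by
  have hderiv (t : ℝ) : HasDerivAt (fun t => Q t * Real.exp (-P t))
      ((Q' t - P' t * Q t) * Real.exp (-P t)) t :=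
    ((hQ t).mul (hP t).fun_neg.exp).congr_deriv (by ring)
  have hanti : AntitoneOn (fun t => Q t * Real.exp (-P t)) (Set.Ici 0) := by
    refine antitoneOn_of_deriv_nonpos (convex_Ici 0)
      (fun t _ => (hderiv t).continuousAt.continuousWithinAt)
      (fun t _ => (hderiv t).differentiableAt.differentiableWithinAt) fun t ht => ?_
    rw [interior_Ici] at ht
    rw [(hderiv t).deriv]
    exact mul_nonpos_of_nonpos_of_nonneg (sub_nonpos.2 (hle t ht)) (Real.exp_pos _).le
  have h := hanti Set.self_mem_Ici hz hz
  calc Q z = Q z * Real.exp (-P z) * Real.exp (P z) := by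
        rw [mul_assoc, ← Real.exp_add, neg_add_cancel, Real.exp_zero, mul_one]
    _ ≤ Q 0 * Real.exp (-P 0) * Real.exp (P z) := by gcongr
    _ = Q 0 * Real.exp (P z - P 0) := by rw [mul_assoc, ← Real.exp_add, neg_add_eq_sub]

theorem sum_range_convolution_le {f g : ℕ → ℝ} (hf : ∀ i, 0 ≤ f i) (hg : ∀ j, 0 ≤ g j) (k : ℕ) :
    ∑ n ∈ Finset.range k, ∑ i ∈ Finset.range (n + 1), f i * g (n - i) ≤
      (∑ i ∈ Finset.range k, f i) * ∑ j ∈ Finset.range (k + 1), g j := by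
  rw [Finset.sum_range_diag_flip k fun i j => f i * g j, Finset.sum_mul]
  refine Finset.sum_le_sum fun i _ => ?_
  rw [← Finset.mul_sum]
  refine mul_le_mul_of_nonneg_left ?_ (hf i)
  exact Finset.sum_le_sum_of_subset_of_nonneg (Finset.range_mono (by lia)) fun j _ _ => hg j

section ExpCoeff

variable {a b : ℕ → ℝ}

theorem sum_mul_pow_le_exp_sum_mul_pow (ha : ∀ n, 0 ≤ a n) (hb : ∀ n, 0 ≤ b n)
    (hab : ∀ n, a (n + 1) = expCoeffStep b a n) (k : ℕ) {z : ℝ} (hz : 0 ≤ z) :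
    ∑ n ∈ Finset.range (k + 1), a n * z ^ n ≤
      a 0 * Real.exp (∑ n ∈ Finset.range k, b n * z ^ (n + 1)) := by
  have hP (z : ℝ) : HasDerivAt (fun z => ∑ n ∈ Finset.range k, b n * z ^ (n + 1))
      (∑ n ∈ Finset.range k, b n * ((n + 1) * z ^ n)) z :=
    HasDerivAt.fun_sum fun n _ => by simpa using (hasDerivAt_pow (n + 1) z).const_mul (b n)
  have hQ (z : ℝ) : HasDerivAt (fun z => ∑ n ∈ Finset.range (k + 1), a n * z ^ n)
      (∑ n ∈ Finset.range k, a (n + 1) * ((n + 1) * z ^ n)) z := by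
    simp only [Finset.sum_range_succ' _ k, pow_zero]
    refine (HasDerivAt.fun_sum fun n _ => ?_).add_const _
    simpa using (hasDerivAt_pow (n + 1) z).const_mul (a (n + 1))
  have h := le_mul_exp_of_deriv_le hP hQ (fun z hz => ?_) hz
  · simpa [Finset.sum_range_succ'] using h
  calc ∑ n ∈ Finset.range k, a (n + 1) * ((n + 1) * z ^ n)
      = ∑ n ∈ Finset.range k, ∑ i ∈ Finset.range (n + 1),
          b i * ((i + 1) * z ^ i) * (a (n - i) * z ^ (n - i)) := by
        refine Finset.sum_congr rfl fun n _ => ?_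
        rw [hab, expCoeffStep, ← mul_assoc, div_mul_cancel₀ _ n.cast_add_one_ne_zero,
          Finset.sum_mul]
        refine Finset.sum_congr rfl fun i hi => ?_
        rw [← pow_mul_pow_sub z (Finset.mem_range_succ_iff.1 hi)]
        ring
    _ ≤ (∑ n ∈ Finset.range k, b n * ((n + 1) * z ^ n)) *
          ∑ n ∈ Finset.range (k + 1), a n * z ^ n :=
        sum_range_convolution_le (fun i => mul_nonneg (hb i) (by positivity))
          (fun j => mul_nonneg (ha j) (by positivity)) k

/-- The inductive step is `A = exp B`, where the defect `a - b` leaves room for `z > exp (-1)`. -/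
theorem sum_mul_pow_succ_le_one (ha : ∀ n, 0 ≤ a n) (hb : ∀ n, 0 ≤ b n) (hba : ∀ n, b n ≤ a n)
    (ha₀ : a 0 = 1) (hab : ∀ n, a (n + 1) = expCoeffStep b a n) {z : ℝ} (hz : 0 ≤ z) {k₀ : ℕ}
    (hk₀ : ∑ n ∈ Finset.range k₀, a n * z ^ (n + 1) ≤ 1)
    (hdefect : z * Real.exp (1 - ∑ n ∈ Finset.range k₀, (a n - b n) * z ^ (n + 1)) ≤ 1) {k : ℕ}
    (hk : k₀ ≤ k) : ∑ n ∈ Finset.range k, a n * z ^ (n + 1) ≤ 1 := by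
  induction k, hk using Nat.le_induction with
  | base => exact hk₀
  | succ k hk ih =>
    have hsum : ∑ n ∈ Finset.range k, b n * z ^ (n + 1) ≤
        1 - ∑ n ∈ Finset.range k₀, (a n - b n) * z ^ (n + 1) := by
      have hmono : ∑ n ∈ Finset.range k₀, (a n - b n) * z ^ (n + 1) ≤
          ∑ n ∈ Finset.range k, (a n - b n) * z ^ (n + 1) :=
        Finset.sum_le_sum_of_subset_of_nonneg (Finset.range_mono hk)
          fun n _ _ => mul_nonneg (sub_nonneg.2 (hba n)) (by positivity)
      simp only [sub_mul, Finset.sum_sub_distrib] at hmono ⊢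
      linarith
    calc ∑ n ∈ Finset.range (k + 1), a n * z ^ (n + 1)
        = z * ∑ n ∈ Finset.range (k + 1), a n * z ^ n := by
          rw [Finset.mul_sum]
          exact Finset.sum_congr rfl fun n _ => by ring
      _ ≤ z * (a 0 * Real.exp (∑ n ∈ Finset.range k, b n * z ^ (n + 1))) := by
          gcongr
          exact sum_mul_pow_le_exp_sum_mul_pow ha hb hab k hz
      _ ≤ z * Real.exp (1 - ∑ n ∈ Finset.range k₀, (a n - b n) * z ^ (n + 1)) := by
          rw [ha₀, one_mul]
          gcongr
      _ ≤ 1 := hdefect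

end ExpCoeff

/-! ### Moments of negative order -/

theorem natCast_mul_rpow (x y : ℕ) (s : ℝ) : ((x * y : ℕ) : ℝ) ^ s = (x : ℝ) ^ s * (y : ℝ) ^ s := by
  rw [Nat.cast_mul, Real.mul_rpow x.cast_nonneg y.cast_nonneg]

theorem sum_mean_one_le_one (k : ℕ) :
    ∑ n ∈ Finset.range k, mean n (fun _ => (1 : ℝ)) * Real.exp (-1) ^ (n + 1) ≤ 1 := by
  have h (n : ℕ) : 0 ≤ mean n fun _ => (1 : ℝ) := mean_nonneg fun _ _ => zero_le_one
  exact sum_mul_pow_succ_le_one h h (fun _ => le_rfl) (mean_zero _)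
    (fun n => mean_add_one n fun _ _ => (one_mul 1).symm) (Real.exp_pos _).le (k₀ := 0) (by simp)
    (by simp [← Real.exp_add]) k.zero_le

theorem mean_one_pos (n : ℕ) : 0 < mean n fun _ => (1 : ℝ) := by
  induction n using Nat.strong_induction_on with
  | _ n ih =>
    cases n with
    | zero => simp
    | succ n =>
      rw [mean_add_one n fun _ _ => (one_mul 1).symm, expCoeffStep]
      refine div_pos (Finset.sum_pos (fun i hi => ?_) Finset.nonempty_range_add_one) (by positivity)
      have hi := Finset.mem_range.1 hi
      exact mul_pos (mul_pos (by positivity) (ih i hi)) (ih (n - i) (by lia))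

theorem sum_mean_one_lt_one (k : ℕ) :
    ∑ n ∈ Finset.range k, mean n (fun _ => (1 : ℝ)) * Real.exp (-1) ^ (n + 1) < 1 :=
  calc _ < ∑ n ∈ Finset.range (k + 1), mean n (fun _ => (1 : ℝ)) * Real.exp (-1) ^ (n + 1) := by
        rw [Finset.sum_range_succ]
        have := mean_one_pos k
        exact lt_add_of_pos_right _ (by positivity)
    _ ≤ 1 := sum_mean_one_le_one _

theorem tendsto_rpow_neg_sub_div {x : ℕ} (hx : 1 ≤ x) :
    Tendsto (fun s : ℝ => s⁻¹ * ((x : ℝ) ^ (-s) - ((1 + x : ℕ) : ℝ) ^ (-s))) (𝓝[>] 0)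
      (𝓝 (Real.log (1 + (x : ℝ)⁻¹))) := by
  have hx₀ : (0 : ℝ) < x := by exact_mod_cast hx
  have hderiv {y : ℝ} (hy : 0 < y) : HasDerivAt (fun s : ℝ => y ^ (-s)) (-Real.log y) 0 := by
    simpa using (hasDerivAt_neg (0 : ℝ)).const_rpow hy
  have hlog : Real.log (1 + (x : ℝ)⁻¹) = -Real.log x - -Real.log ((1 + x : ℕ) : ℝ) := by
    rw [neg_sub_neg, ← Real.log_div (by positivity) hx₀.ne', Nat.cast_add, Nat.cast_one,
      add_div, div_self hx₀.ne', one_div, add_comm]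
  rw [hlog]
  simpa using ((hderiv hx₀).fun_sub (hderiv (by positivity))).tendsto_slope_zero_right

/-- As `s → 0`, the defect divided by `s` tends to the mean of `log (1 + 1 / x)`. -/
theorem exists_order_of_lt_sum_mean_log {c : ℝ} {k : ℕ}
    (hc : c < ∑ n ∈ Finset.range k,
      mean n (fun x => Real.log (1 + (x : ℝ)⁻¹)) * Real.exp (-1) ^ (n + 1)) :
    ∃ s : ℝ, 0 < s ∧
      ∑ n ∈ Finset.range k, mean n (fun x => (x : ℝ) ^ (-s)) * Real.exp (-1 + s * c) ^ (n + 1) ≤ 1 ∧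
      s * c ≤ ∑ n ∈ Finset.range k, (mean n (fun x => (x : ℝ) ^ (-s)) -
        mean n fun x => ((1 + x : ℕ) : ℝ) ^ (-s)) * Real.exp (-1 + s * c) ^ (n + 1) := by
  have hz : Tendsto (fun s : ℝ => Real.exp (-1 + s * c)) (𝓝[>] 0) (𝓝 (Real.exp (-1))) := by
    have : Continuous fun s : ℝ => Real.exp (-1 + s * c) := by fun_prop
    simpa using (this.tendsto 0).mono_left nhdsWithin_le_nhds
  have hpow {x : ℕ} (hx : 1 ≤ x) : Tendsto (fun s : ℝ => (x : ℝ) ^ (-s)) (𝓝[>] 0) (𝓝 1) := by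
    have : Continuous fun s : ℝ => (x : ℝ) ^ (-s) :=
      (Real.continuous_const_rpow (by positivity)).comp continuous_neg
    simpa using (this.tendsto 0).mono_left nhdsWithin_le_nhds
  have hsum := tendsto_finsetSum (Finset.range k) fun n _ =>
    (tendsto_mean (n := n) fun _ => hpow).mul (hz.pow (n + 1))
  have hdefect := tendsto_finsetSum (Finset.range k) fun n _ =>
    (tendsto_mean (n := n) fun _ => tendsto_rpow_neg_sub_div).mul (hz.pow (n + 1))
  obtain ⟨s, ⟨hs_sum, hs_defect⟩, hs⟩ :=
    ((hsum.eventually_lt_const (sum_mean_one_lt_one k)).and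
      (hdefect.eventually_const_lt hc)).and self_mem_nhdsWithin |>.exists
  refine ⟨s, hs, hs_sum.le, ?_⟩
  simp only [mean_mul_left, mean_sub, mul_assoc, ← Finset.mul_sum] at hs_defect
  exact ((lt_inv_mul_iff₀ hs).1 hs_defect).le

theorem exists_mean_rpow_neg_le {c : ℝ} {k : ℕ}
    (hc : c < ∑ n ∈ Finset.range k,
      mean n (fun x => Real.log (1 + (x : ℝ)⁻¹)) * Real.exp (-1) ^ (n + 1)) :
    ∃ s : ℝ, 0 < s ∧ ∀ n : ℕ, mean n (fun x => (x : ℝ) ^ (-s)) ≤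
      Real.exp ((1 - s * c) * (n + 1)) := by
  obtain ⟨s, hs, hsum, hdefect⟩ := exists_order_of_lt_sum_mean_log hc
  refine ⟨s, hs, fun n => ?_⟩
  have ha (n : ℕ) : 0 ≤ mean n fun x => (x : ℝ) ^ (-s) := mean_nonneg fun _ _ => by positivity
  have h_le : ∑ m ∈ Finset.range (k + n + 1), mean m (fun x => (x : ℝ) ^ (-s)) *
      Real.exp (-1 + s * c) ^ (m + 1) ≤ 1 := by
    refine sum_mul_pow_succ_le_one ha
      (fun n => mean_nonneg fun x _ => Real.rpow_nonneg (1 + x : ℕ).cast_nonneg _)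
      (fun n => mean_mono fun x hx => ?_) (by simp)
      (fun n => mean_add_one n fun x y => natCast_mul_rpow x y (-s)) (Real.exp_pos _).le hsum ?_
      (by lia)
    · exact Real.rpow_le_rpow_of_nonpos (by positivity) (by simp) (neg_nonpos.2 hs.le)
    · rw [← Real.exp_add, Real.exp_le_one_iff]
      linarith
  have hn : n ∈ Finset.range (k + n + 1) := Finset.mem_range.2 (by lia)
  have h_term : mean n (fun x => (x : ℝ) ^ (-s)) * Real.exp (-1 + s * c) ^ (n + 1) ≤ 1 :=
    (Finset.single_le_sum (f := fun m => mean m (fun x => (x : ℝ) ^ (-s)) *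
      Real.exp (-1 + s * c) ^ (m + 1)) (fun m _ => mul_nonneg (ha m) (by positivity))
      hn).trans h_le
  rw [← le_div_iff₀ (by positivity), ← Real.exp_nat_mul, one_div, ← Real.exp_neg] at h_term
  refine h_term.trans_eq (congrArg Real.exp ?_)
  push_cast
  ring

/-! ### Numerical lower bound for the mean of `log (1 + 1 / x)` -/

/-- A rational lower bound for `mean n fun x => (1 + x)⁻¹`, given a lower bound `r` for
`mean n fun x => x⁻¹` and an upper bound `s` for `mean n fun x => x⁻¹ ^ 2`. Small `n` use
`law n`. -/
def shiftedInvLower (n : ℕ) (r s : ℚ) : ℚ :=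
  if n < 9 then mean n fun x => ((1 + x : ℕ) : ℚ)⁻¹ else max 0 (r - s)

/-- A rational upper bound for `mean n fun x => (1 + x)⁻¹ ^ 2`, given an upper bound `s` for
`mean n fun x => x⁻¹ ^ 2`. Small `n` use `law n`. -/
def shiftedInvSqUpper (n : ℕ) (s : ℚ) : ℚ :=
  if n < 9 then mean n fun x => ((1 + x : ℕ) : ℚ)⁻¹ ^ 2 else s

/-- The next entry of `momentTable`, with `t i` the entry of index `i`. -/
def nextMoments (t : ℕ → ℚ × ℚ) : ℕ → ℚ × ℚ
  | 0 => (1, 1)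
  | n + 1 =>
    (expCoeffStep (fun i => shiftedInvLower i (t i).1 (t i).2) (fun j => (t j).1) n,
      expCoeffStep (fun i => shiftedInvSqUpper i (t i).2) (fun j => (t j).2) n)

/-- For each `i < n` a lower bound for the mean of `1 / x` and an upper bound for the mean of
`1 / x ^ 2`, as a list in order that evaluation does not repeat the recursion. -/
def momentTable : ℕ → List (ℚ × ℚ)
  | 0 => []
  | n + 1 => momentTable n ++ [nextMoments (fun i => (momentTable n).getD i 0) n]

/-- Beginning of the series of `log (1 + x⁻¹)` in powers of `(2 * x + 1)⁻¹`. -/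
def logSeries (x : ℕ) : ℚ :=
  ∑ i ∈ Finset.range 6, 2 * (1 / (2 * i + 1)) * (1 / (2 * x + 1)) ^ (2 * i + 1)

/-- A rational lower bound for `mean n fun x => log (1 + x⁻¹)`. -/
def meanLogLower (n : ℕ) (m : ℚ × ℚ) : ℚ :=
  if n < 9 then mean n logSeries else m.1 - m.2 / 2

theorem inv_sub_inv_sq_le {x : ℕ} (hx : 1 ≤ x) :
    (x : ℚ)⁻¹ - (x : ℚ)⁻¹ ^ 2 ≤ ((1 + x : ℕ) : ℚ)⁻¹ := by
  have : (0 : ℚ) < x := by exact_mod_cast hx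
  have h : ((1 + x : ℕ) : ℚ)⁻¹ - ((x : ℚ)⁻¹ - (x : ℚ)⁻¹ ^ 2) = (x : ℚ)⁻¹ ^ 2 * (1 + x : ℚ)⁻¹ := by
    push_cast
    field_simp
    ring
  rw [← sub_nonneg, h]
  positivity

theorem shiftedInvLower_nonneg (n : ℕ) (r s : ℚ) : 0 ≤ shiftedInvLower n r s := by
  unfold shiftedInvLower
  split_ifs
  · exact mean_nonneg fun x _ => inv_nonneg.2 (Nat.cast_nonneg _)
  · exact le_max_left _ _

theorem shiftedInvLower_le {n : ℕ} {r s : ℚ} (hr : r ≤ mean n fun x => (x : ℚ)⁻¹)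
    (hs : mean n (fun x => (x : ℚ)⁻¹ ^ 2) ≤ s) :
    shiftedInvLower n r s ≤ mean n fun x => ((1 + x : ℕ) : ℚ)⁻¹ := by
  unfold shiftedInvLower
  split_ifs
  · rfl
  · refine max_le (mean_nonneg fun x _ => inv_nonneg.2 (Nat.cast_nonneg _)) ?_
    calc r - s ≤ mean n fun x => (x : ℚ)⁻¹ - (x : ℚ)⁻¹ ^ 2 := by
          rw [mean_sub]
          exact sub_le_sub hr hs
      _ ≤ _ := mean_mono fun _ => inv_sub_inv_sq_le

theorem le_shiftedInvSqUpper {n : ℕ} {s : ℚ} (hs : mean n (fun x => (x : ℚ)⁻¹ ^ 2) ≤ s) :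
    mean n (fun x => ((1 + x : ℕ) : ℚ)⁻¹ ^ 2) ≤ shiftedInvSqUpper n s := by
  unfold shiftedInvSqUpper
  split_ifs
  · rfl
  · refine (mean_mono fun x hx => ?_).trans hs
    gcongr
    lia

/-- The specification of an entry of `momentTable`. -/
def IsMomentBound (n : ℕ) (m : ℚ × ℚ) : Prop :=
  0 ≤ m.1 ∧ m.1 ≤ mean n (fun x => (x : ℚ)⁻¹) ∧ mean n (fun x => (x : ℚ)⁻¹ ^ 2) ≤ m.2

theorem isMomentBound_nextMoments {t : ℕ → ℚ × ℚ} {n : ℕ} (ht : ∀ i < n, IsMomentBound i (t i)) :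
    IsMomentBound n (nextMoments t n) := by
  cases n with
  | zero => simp [IsMomentBound, nextMoments]
  | succ n =>
    have ht (i : ℕ) (hi : i ≤ n) := ht i (Nat.lt_succ_of_le hi)
    have h_lower (i : ℕ) (_ : i ≤ n) := shiftedInvLower_nonneg i (t i).1 (t i).2
    have h_nonneg (i : ℕ) (k : ℕ) (f : ℕ → ℕ) : 0 ≤ mean i fun x => (f x : ℚ)⁻¹ ^ k :=
      mean_nonneg fun x _ => by positivity
    refine ⟨?_, ?_, ?_⟩
    · exact div_nonneg (Finset.sum_nonneg fun i hi => mul_nonneg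
        (mul_nonneg (by positivity) (h_lower i (Finset.mem_range_succ_iff.1 hi)))
        (ht _ (n.sub_le i)).1) (by positivity)
    · rw [mean_add_one n fun x y => by rw [Nat.cast_mul, mul_inv]]
      exact expCoeffStep_mono h_lower (fun i hi => shiftedInvLower_le (ht i hi).2.1 (ht i hi).2.2)
        (fun i hi => (ht i hi).1) fun i hi => (ht i hi).2.1
    · rw [mean_add_one n fun x y => by rw [Nat.cast_mul, mul_inv, mul_pow]]
      exact expCoeffStep_mono (fun i _ => h_nonneg i 2 _)
        (fun i hi => le_shiftedInvSqUpper (ht i hi).2.2)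
        (fun i _ => h_nonneg i 2 _) fun i hi => (ht i hi).2.2

theorem length_momentTable (n : ℕ) : (momentTable n).length = n := by
  induction n with
  | zero => rfl
  | succ n ih => simp [momentTable, ih]

theorem isMomentBound_momentTable {n i : ℕ} (hi : i < n) :
    IsMomentBound i ((momentTable n).getD i 0) := by
  induction n generalizing i with
  | zero => simp at hi
  | succ n ih =>
    rw [momentTable]
    rcases Nat.lt_succ_iff_lt_or_eq.1 hi with hi | rfl
    · rw [List.getD_append _ _ _ _ (by rwa [length_momentTable])]
      exact ih hi
    · rw [List.getD_append_right _ _ _ _ (length_momentTable i).le, length_momentTable,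
        Nat.sub_self]
      exact isMomentBound_nextMoments fun j => ih

theorem logSeries_le {x : ℕ} (hx : 1 ≤ x) : (logSeries x : ℝ) ≤ Real.log (1 + (x : ℝ)⁻¹) := by
  have h := sum_le_hasSum (Finset.range 6) (fun i _ => by positivity)
    (Real.hasSum_log_one_add_inv (a := x) (by positivity))
  simpa [logSeries] using h

theorem inv_sub_inv_sq_div_two_le_log (x : ℕ) :
    (x : ℝ)⁻¹ - (x : ℝ)⁻¹ ^ 2 / 2 ≤ Real.log (1 + (x : ℝ)⁻¹) := by
  refine le_trans ?_ (Real.le_log_one_add_of_nonneg (x := (x : ℝ)⁻¹) (by positivity))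
  rw [le_div_iff₀ (by positivity)]
  nlinarith [pow_nonneg (inv_nonneg.2 (Nat.cast_nonneg (α := ℝ) x)) 3]

theorem meanLogLower_le {n : ℕ} {m : ℚ × ℚ} (hm : IsMomentBound n m) :
    (meanLogLower n m : ℝ) ≤ mean n fun x => Real.log (1 + (x : ℝ)⁻¹) := by
  unfold meanLogLower
  split_ifs
  · rw [cast_mean]
    exact mean_mono fun _ => logSeries_le
  · have h : m.1 - m.2 / 2 ≤ mean n fun x => (x : ℚ)⁻¹ - 2⁻¹ * (x : ℚ)⁻¹ ^ 2 := by
      rw [mean_sub, mean_mul_left]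
      linarith [hm.2.1, hm.2.2]
    calc ((m.1 - m.2 / 2 : ℚ) : ℝ) ≤ (mean n fun x => (x : ℚ)⁻¹ - 2⁻¹ * (x : ℚ)⁻¹ ^ 2 : ℚ) := by
          exact_mod_cast h
      _ = mean n fun x => (x : ℝ)⁻¹ - (x : ℝ)⁻¹ ^ 2 / 2 := by
          rw [cast_mean]
          push_cast
          simp only [div_eq_inv_mul]
      _ ≤ _ := mean_mono fun x _ => inv_sub_inv_sq_div_two_le_log x

set_option maxRecDepth 100000 in
theorem lt_sum_meanLogLower : (0.349283 : ℚ) < ∑ n ∈ Finset.range 32,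
    meanLogLower n ((momentTable 32).getD n 0) * 2.7182818286⁻¹ ^ (n + 1) := by
  decide +kernel

theorem lt_sum_mean_log : (0.349283 : ℝ) < ∑ n ∈ Finset.range 32,
    mean n (fun x => Real.log (1 + (x : ℝ)⁻¹)) * Real.exp (-1) ^ (n + 1) := by
  have hexp : (2.7182818286 : ℝ)⁻¹ ≤ Real.exp (-1) := by
    rw [Real.exp_neg]
    exact inv_anti₀ (Real.exp_pos 1) Real.exp_one_lt_d9.le
  calc (0.349283 : ℝ) < ∑ n ∈ Finset.range 32,
        (meanLogLower n ((momentTable 32).getD n 0) : ℝ) * 2.7182818286⁻¹ ^ (n + 1) := by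
        simpa only [Rat.cast_sum, Rat.cast_mul, Rat.cast_pow, Rat.cast_inv, Rat.cast_ofScientific]
          using (Rat.cast_lt (K := ℝ)).2 lt_sum_meanLogLower
    _ ≤ _ := by
        refine Finset.sum_le_sum fun n hn => ?_
        have h := meanLogLower_le (isMomentBound_momentTable (Finset.mem_range.1 hn))
        gcongr
        exact mean_nonneg fun x _ => Real.log_nonneg (by simp)

theorem log_141805_lt : Real.log 1.41805 < 0.349283 := by
  rw [Real.log_lt_iff_lt_exp (by norm_num)]
  refine lt_of_lt_of_le ?_ (Real.sum_le_exp_of_nonneg (by norm_num) 8)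
  norm_num [Finset.sum_range_succ, Nat.factorial]

/-! ### Codes of rooted labelled trees -/

/-- A rooted labelled tree written as a binary expression: `leaf r` is the one-vertex tree with
root `r`, and `graft a b` joins the root of `a` to the root of `b`, keeping the root of `b`. -/
inductive Code (V : Type*)
  | leaf (r : V) : Code V
  | graft (a b : Code V) : Code V

namespace Code

variable {V : Type*}

/-- The root of the tree described by a code. -/
def root : Code V → V
  | leaf r => r
  | graft _ b => b.root

/-- The number of subtrees through the root: such a subtree of `graft a b` either avoids the
branch `a` or meets it in a subtree through the root of `a`. -/
def val : Code V → ℕ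
  | leaf _ => 1
  | graft a b => (1 + a.val) * b.val

/-- The edges of the tree described by a code. -/
def edges : Code V → Set (Sym2 V)
  | leaf _ => ∅
  | graft a b => insert s(a.root, b.root) (a.edges ∪ b.edges)

theorem val_pos (t : Code V) : 0 < t.val := by
  induction t with
  | leaf _ => exact one_pos
  | graft a b _ hb => exact Nat.mul_pos (by lia) hb

variable [DecidableEq V]

/-- The vertices that occur in a code. -/
def verts : Code V → Finset V
  | leaf r => {r}
  | graft a b => a.verts ∪ b.verts

/-- No vertex occurs twice in the code. -/
def IsProper : Code V → Prop
  | leaf _ => True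
  | graft a b => a.IsProper ∧ b.IsProper ∧ Disjoint a.verts b.verts

/-- The vertex sets of the subtrees through the root. -/
def subtrees : Code V → Finset (Finset V)
  | leaf r => {{r}}
  | graft a b => b.subtrees ∪ Finset.image₂ (· ∪ ·) a.subtrees b.subtrees

theorem subset_verts_of_mem_subtrees {t : Code V} {A : Finset V} (hA : A ∈ t.subtrees) :
    A ⊆ t.verts := by
  induction t generalizing A with
  | leaf r => exact (Finset.mem_singleton.1 hA).subset
  | graft a b iha ihb =>
    rcases Finset.mem_union.1 hA with hA | hA
    · exact (ihb hA).trans Finset.subset_union_right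
    · obtain ⟨P, hP, Q, hQ, rfl⟩ := Finset.mem_image₂.1 hA
      exact Finset.union_subset_union (iha hP) (ihb hQ)

theorem root_mem_of_mem_subtrees {t : Code V} {A : Finset V} (hA : A ∈ t.subtrees) :
    t.root ∈ A := by
  induction t generalizing A with
  | leaf r => exact (Finset.mem_singleton.1 hA) ▸ Finset.mem_singleton_self r
  | graft a b _ ihb =>
    rcases Finset.mem_union.1 hA with hA | hA
    · exact ihb hA
    · obtain ⟨P, -, Q, hQ, rfl⟩ := Finset.mem_image₂.1 hA
      exact Finset.mem_union_right P (ihb hQ)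

theorem connected_induce_of_mem_subtrees {G : SimpleGraph V} {t : Code V} (ht : t.edges ⊆ G.edgeSet)
    {A : Finset V} (hA : A ∈ t.subtrees) : (G.induce (A : Set V)).Connected := by
  induction t generalizing A with
  | leaf r =>
    rw [Finset.mem_singleton.1 hA, Finset.coe_singleton]
    exact SimpleGraph.Connected.of_subsingleton
  | graft a b iha ihb =>
    obtain ⟨hadj, hab⟩ := Set.insert_subset_iff.1 ht
    obtain ⟨ha, hb⟩ := Set.union_subset_iff.1 hab
    rcases Finset.mem_union.1 hA with hA | hA
    · exact ihb hb hA
    · obtain ⟨P, hP, Q, hQ, rfl⟩ := Finset.mem_image₂.1 hA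
      rw [Finset.coe_union]
      exact SimpleGraph.connected_induce_union (iha ha hP).preconnected (ihb hb hQ).preconnected
        (root_mem_of_mem_subtrees hP) (root_mem_of_mem_subtrees hQ) hadj

theorem IsProper.card_subtrees {t : Code V} (ht : t.IsProper) : t.subtrees.card = t.val := by
  induction t with
  | leaf r => rfl
  | graft a b iha ihb =>
    obtain ⟨ha, hb, hab⟩ := ht
    have h_inj : Set.InjOn (fun P : Finset V × Finset V => P.1 ∪ P.2)
        (a.subtrees ×ˢ b.subtrees : Set (Finset V × Finset V)) := by
      rintro ⟨P, Q⟩ ⟨hP, hQ⟩ ⟨P', Q'⟩ ⟨hP', hQ'⟩ h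
      have hPa := subset_verts_of_mem_subtrees hP
      have hPa' := subset_verts_of_mem_subtrees hP'
      have hQb := subset_verts_of_mem_subtrees hQ
      have hQb' := subset_verts_of_mem_subtrees hQ'
      rw [Finset.disjoint_left] at hab
      simp only [Finset.ext_iff, Finset.mem_union] at h
      refine Prod.ext (Finset.ext fun v => ?_) (Finset.ext fun v => ?_) <;> grind
    have h_disj : Disjoint b.subtrees (Finset.image₂ (· ∪ ·) a.subtrees b.subtrees) := by
      refine Finset.disjoint_left.2 fun A hA hA' => ?_
      obtain ⟨P, hP, Q, -, rfl⟩ := Finset.mem_image₂.1 hA'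
      have h_root := root_mem_of_mem_subtrees hP
      exact Finset.disjoint_left.1 hab (subset_verts_of_mem_subtrees hP h_root)
        (subset_verts_of_mem_subtrees hA (Finset.mem_union_left Q h_root))
    rw [subtrees, Finset.card_union_of_disjoint h_disj, Finset.card_image₂_iff.2 h_inj, iha ha,
      ihb hb, val]
    ring

theorem IsProper.val_le_card_connected [Finite V] {G : SimpleGraph V} {t : Code V}
    (ht : t.IsProper) (hG : t.edges ⊆ G.edgeSet) :
    t.val ≤ Nat.card {S : Set V // (G.induce S).Connected} := by
  rw [← ht.card_subtrees, ← Nat.card_eq_finsetCard]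
  refine Nat.card_le_card_of_injective (β := {S : Set V // (G.induce S).Connected})
    (fun A => ⟨(A.1 : Set V), connected_induce_of_mem_subtrees hG A.2⟩) fun A B hAB => ?_
  exact Subtype.ext (Finset.coe_injective (congrArg Subtype.val hAB))

end Code

section Codes

variable {V : Type*} [DecidableEq V]

open Classical in
/-- The canonical codes of all labelled trees with root `r` and set of non-root vertices `S`:
the last grafted branch, with vertex set `insert m B` and root `a`, is the one that contains a
fixed vertex `m` of `S`. -/
noncomputable def codes (S : Finset V) (r : V) : Multiset (Code V) :=
  if h : S.Nonempty then
    let m := h.choose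
    ∑ B ∈ (S.erase m).powerset.attach, ∑ a ∈ (insert m B.1).attach,
      (codes ((insert m B.1).erase a.1) a).bind fun x =>
        (codes (S \ insert m B.1) r).map (Code.graft x)
  else {Code.leaf r}
termination_by S.card
decreasing_by
  all_goals
    have hm := h.choose_spec
    have hB : insert h.choose B.1 ⊆ S :=
      Finset.insert_subset hm ((Finset.mem_powerset.1 B.2).trans (Finset.erase_subset _ _))
  · exact (Finset.card_erase_lt_of_mem a.2).trans_le (Finset.card_le_card hB)
  · exact Finset.card_lt_card (Finset.sdiff_ssubset hB (Finset.insert_nonempty _ _))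

theorem codes_empty (r : V) : codes ∅ r = {Code.leaf r} := by
  rw [codes, dif_neg Finset.not_nonempty_empty]

theorem codes_of_nonempty {S : Finset V} (h : S.Nonempty) (r : V) :
    codes S r = ∑ B ∈ (S.erase h.choose).powerset, ∑ a ∈ insert h.choose B,
      (codes ((insert h.choose B).erase a) a).bind fun x =>
        (codes (S \ insert h.choose B) r).map (Code.graft x) := by
  rw [codes, dif_pos h, ← Finset.sum_attach (S.erase h.choose).powerset]
  refine Finset.sum_congr rfl fun B _ => ?_
  rw [← Finset.sum_attach (insert h.choose B.1)]

theorem mem_codes {S : Finset V} (h : S.Nonempty) {r : V} {t : Code V} :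
    t ∈ codes S r ↔ ∃ A ⊆ S, h.choose ∈ A ∧ ∃ a ∈ A, ∃ x ∈ codes (A.erase a) a,
      ∃ y ∈ codes (S \ A) r, Code.graft x y = t := by
  simp only [codes_of_nonempty h, Multiset.mem_sum, Multiset.mem_bind, Multiset.mem_map,
    Finset.mem_powerset]
  constructor
  · rintro ⟨B, hB, ht⟩
    exact ⟨_, Finset.insert_subset h.choose_spec (hB.trans (Finset.erase_subset _ _)),
      Finset.mem_insert_self _ _, ht⟩
  · rintro ⟨A, hA, hmA, ht⟩
    refine ⟨A.erase h.choose, Finset.erase_subset_erase _ hA, ?_⟩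
    rwa [Finset.insert_erase hmA]

theorem codes_induction {motive : Finset V → V → Code V → Prop}
    (leaf : ∀ r, motive ∅ r (Code.leaf r))
    (graft : ∀ {S A : Finset V} {a r : V} {x y : Code V}, A ⊆ S → a ∈ A →
      x ∈ codes (A.erase a) a → y ∈ codes (S \ A) r →
      motive (A.erase a) a x → motive (S \ A) r y → motive S r (Code.graft x y))
    {S : Finset V} {r : V} {t : Code V} (ht : t ∈ codes S r) : motive S r t := by
  induction t generalizing S r with
  | leaf v =>
    rcases S.eq_empty_or_nonempty with rfl | h
    · rw [codes_empty, Multiset.mem_singleton] at ht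
      exact ht ▸ leaf r
    · obtain ⟨A, -, -, a, -, x, -, y, -, hxy⟩ := (mem_codes h).1 ht
      cases hxy
  | graft u v ihu ihv =>
    rcases S.eq_empty_or_nonempty with rfl | h
    · rw [codes_empty, Multiset.mem_singleton] at ht
      cases ht
    · obtain ⟨A, hA, -, a, ha, x, hx, y, hy, hxy⟩ := (mem_codes h).1 ht
      cases hxy
      exact graft hA ha hx hy (ihu hx) (ihv hy)

theorem root_of_mem_codes {S : Finset V} {r : V} {t : Code V} (ht : t ∈ codes S r) :
    t.root = r :=
  codes_induction (motive := fun _ r t => t.root = r) (fun _ => rfl) (fun _ _ _ _ _ hy => hy) ht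

theorem verts_of_mem_codes {S : Finset V} {r : V} {t : Code V} (ht : t ∈ codes S r) :
    t.verts = insert r S := by
  refine codes_induction (motive := fun S r t => t.verts = insert r S) (fun _ => rfl) ?_ ht
  intro S A a r x y hA ha _ _ hx hy
  rw [Code.verts, hx, hy, Finset.insert_erase ha, Finset.union_insert,
    Finset.union_sdiff_of_subset hA]

theorem isProper_of_mem_codes {S : Finset V} {r : V} (hr : r ∉ S) {t : Code V}
    (ht : t ∈ codes S r) : t.IsProper := by
  refine codes_induction (motive := fun S r t => r ∉ S → t.IsProper) (fun _ _ => trivial) ?_ ht hr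
  intro S A a r x y hA ha hx hy ihx ihy hr
  refine ⟨ihx (Finset.notMem_erase a A), ihy fun h => hr (Finset.sdiff_subset h), ?_⟩
  rw [verts_of_mem_codes hx, verts_of_mem_codes hy, Finset.insert_erase ha,
    Finset.disjoint_insert_right]
  exact ⟨fun h => hr (hA h), Finset.disjoint_sdiff⟩

omit [DecidableEq V] in
theorem sum_map_val_bind_graft {R : Type*} [AddCommMonoid R] (X Y : Multiset (Code V))
    (g : ℕ → R) :
    ((X.bind fun x => Y.map (Code.graft x)).map fun t => g t.val).sum =
      (X.map fun x => (Y.map fun y => g ((1 + x.val) * y.val)).sum).sum := by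
  simp only [Multiset.map_bind, Multiset.sum_bind, Multiset.map_map, Function.comp_def, Code.val]

theorem sum_map_val_codes_of_nonempty {R : Type*} [AddCommMonoid R] {S : Finset V}
    (h : S.Nonempty) (r : V) (g : ℕ → R) :
    ((codes S r).map fun t => g t.val).sum =
      ∑ B ∈ (S.erase h.choose).powerset, ∑ a ∈ insert h.choose B,
        ((codes ((insert h.choose B).erase a) a).map fun x =>
          ((codes (S \ insert h.choose B) r).map fun y => g ((1 + x.val) * y.val)).sum).sum := by
  let weight : Multiset (Code V) →+ R :=
    Multiset.sumAddMonoidHom.comp (Multiset.mapAddMonoidHom fun t => g t.val)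
  calc weight (codes S r)
    _ = ∑ B ∈ (S.erase h.choose).powerset, ∑ a ∈ insert h.choose B,
          weight ((codes ((insert h.choose B).erase a) a).bind fun x =>
            (codes (S \ insert h.choose B) r).map (Code.graft x)) := by
      simp only [codes_of_nonempty h, map_sum]
    _ = _ := Finset.sum_congr rfl fun _ _ => Finset.sum_congr rfl fun _ _ =>
      sum_map_val_bind_graft _ _ g

theorem sum_map_val_codes {R : Type*} [CommSemiring R] (S : Finset V) (r : V) (g : ℕ → R) :
    ((codes S r).map fun t => g t.val).sum = lawSum S.card g := by
  induction S using Finset.strongInduction generalizing r g with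
  | H S ih =>
    rcases S.eq_empty_or_nonempty with rfl | h
    · rw [codes_empty, Finset.card_empty, lawSum_zero]
      simp only [Multiset.map_singleton, Multiset.sum_singleton, Code.val]
    rw [sum_map_val_codes_of_nonempty h]
    set m := h.choose
    have hmS : m ∈ S := h.choose_spec
    have h_branches {B : Finset V} (hB : B ∈ (S.erase m).powerset) :
        ∑ a ∈ insert m B, ((codes ((insert m B).erase a) a).map fun x =>
          ((codes (S \ insert m B) r).map fun y => g ((1 + x.val) * y.val)).sum).sum =
        (B.card + 1) • lawSum B.card fun x =>
          lawSum ((S.erase m).card - B.card) fun y => g ((1 + x) * y) := by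
      have hBm : B ⊆ S.erase m := Finset.mem_powerset.1 hB
      have h_card : (insert m B).card = B.card + 1 :=
        Finset.card_insert_of_notMem fun h => Finset.notMem_erase m S (hBm h)
      have hBS : insert m B ⊆ S := Finset.insert_subset hmS (hBm.trans (Finset.erase_subset m S))
      rw [← h_card]
      refine Finset.sum_eq_card_nsmul fun a ha => ?_
      have hY (k : ℕ) := ih _ (Finset.sdiff_ssubset hBS (Finset.insert_nonempty m B)) r
        fun y => g ((1 + k) * y)
      simp only [hY]
      refine (ih _ ((Finset.erase_ssubset ha).trans_subset hBS) a fun k =>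
        lawSum (S \ insert m B).card fun y => g ((1 + k) * y)).trans ?_
      rw [Finset.card_erase_of_mem ha, h_card, Nat.add_sub_cancel, Finset.card_sdiff_of_subset hBS,
        h_card, Finset.card_erase_of_mem hmS, Nat.sub_sub, add_comm 1]
    rw [Finset.sum_congr rfl fun B hB => h_branches hB, ← Finset.card_erase_add_one hmS,
      lawSum_add_one, Finset.sum_powerset_apply_card fun i => (i + 1) • lawSum i fun x =>
        lawSum ((S.erase m).card - i) fun y => g ((1 + x) * y)]
    simp only [nsmul_eq_mul, Nat.cast_add, Nat.cast_one, mul_assoc]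

/-! ### Parent maps -/

/-- `p` is the parent map of a tree with root `r` and set of non-root vertices `S`, as witnessed by
a rank function `d` that decreases strictly along `p` on `S`. The rank may not increase anywhere
else either, so that the condition passes to branches with the same `p` and `d`. -/
structure IsParentMap (p : V → V) (d : V → ℕ) (S : Finset V) (r : V) : Prop where
  rank_le (u : V) : d (p u) ≤ d u
  parent_mem {u : V} (hu : u ∈ S) : p u ∈ insert r S
  rank_lt {u : V} (hu : u ∈ S) : d (p u) < d u

open Classical in
/-- The vertices of `S` from which iterating `p` leads to `a`. -/
noncomputable def descendants (p : V → V) (S : Finset V) (a : V) : Finset V :=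
  S.filter fun u => ∃ i, p^[i] u = a

omit [DecidableEq V] in
theorem mem_descendants {p : V → V} {S : Finset V} {a u : V} :
    u ∈ descendants p S a ↔ u ∈ S ∧ ∃ i, p^[i] u = a :=
  open Classical in Finset.mem_filter

omit [DecidableEq V] in
theorem descendants_subset (p : V → V) (S : Finset V) (a : V) : descendants p S a ⊆ S :=
  open Classical in Finset.filter_subset _ _

namespace IsParentMap

variable {p : V → V} {d : V → ℕ} {S : Finset V} {r a u : V}

theorem rank_iterate_le (h : IsParentMap p d S r) (i : ℕ) (u : V) : d (p^[i] u) ≤ d u := by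
  induction i with
  | zero => rfl
  | succ i ih => exact (Function.iterate_succ_apply' p i u ▸ h.rank_le _).trans ih

theorem iterate_parent_ne (h : IsParentMap p d S r) (ha : a ∈ S) (i : ℕ) : p^[i] (p a) ≠ a :=
  fun hi => absurd (h.rank_lt ha) (not_lt.2 (by simpa only [hi] using h.rank_iterate_le i (p a)))

theorem exists_branch (h : IsParentMap p d S r) (hu : u ∈ S) :
    ∃ a ∈ S, p a = r ∧ u ∈ descendants p S a := by
  induction hN : d u using Nat.strong_induction_on generalizing u with
  | _ N ih =>
    rcases Finset.mem_insert.1 (h.parent_mem hu) with hpu | hpu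
    · exact ⟨u, hu, hpu, mem_descendants.2 ⟨hu, 0, rfl⟩⟩
    · obtain ⟨a, ha, hpa, h_desc⟩ := ih _ (hN ▸ h.rank_lt hu) hpu rfl
      obtain ⟨-, i, hi⟩ := mem_descendants.1 h_desc
      exact ⟨a, ha, hpa, mem_descendants.2 ⟨hu, i + 1, hi⟩⟩

theorem descendants_erase (h : IsParentMap p d S (p a)) (ha : a ∈ S) :
    IsParentMap p d ((descendants p S a).erase a) a where
  rank_le := h.rank_le
  parent_mem {u} hu := by
    obtain ⟨hua, hu⟩ := Finset.mem_erase.1 hu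
    obtain ⟨huS, i, hi⟩ := mem_descendants.1 hu
    obtain ⟨j, rfl⟩ : ∃ j, i = j + 1 :=
      Nat.exists_eq_succ_of_ne_zero fun h => hua (by rwa [h] at hi)
    have haA : a ∈ descendants p S a := mem_descendants.2 ⟨ha, 0, rfl⟩
    rw [Finset.insert_erase haA, mem_descendants]
    refine ⟨Finset.mem_of_mem_insert_of_ne (h.parent_mem huS) fun hpu => ?_, j, hi⟩
    exact h.iterate_parent_ne ha j (hpu ▸ hi)
  rank_lt hu := h.rank_lt (descendants_subset p S a (Finset.mem_of_mem_erase hu))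

theorem sdiff_descendants (h : IsParentMap p d S r) (a : V) :
    IsParentMap p d (S \ descendants p S a) r where
  rank_le := h.rank_le
  parent_mem {u} hu := by
    obtain ⟨huS, hu⟩ := Finset.mem_sdiff.1 hu
    rw [Finset.mem_insert, Finset.mem_sdiff]
    refine (Finset.mem_insert.1 (h.parent_mem huS)).imp_right fun hpS => ⟨hpS, fun hp => hu ?_⟩
    obtain ⟨-, i, hi⟩ := mem_descendants.1 hp
    exact mem_descendants.2 ⟨huS, i + 1, hi⟩
  rank_lt hu := h.rank_lt (Finset.sdiff_subset hu)

theorem exists_mem_codes (h : IsParentMap p d S r) :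
    ∃ t ∈ codes S r, t.edges = (fun u => s(u, p u)) '' S := by
  induction S using Finset.strongInduction generalizing r with
  | H S ih =>
    rcases S.eq_empty_or_nonempty with rfl | hS
    · exact ⟨Code.leaf r, by simp [codes_empty], by simp [Code.edges]⟩
    obtain ⟨a, haS, rfl, h_desc⟩ := h.exists_branch hS.choose_spec
    have hAS := descendants_subset p S a
    have haA : a ∈ descendants p S a := mem_descendants.2 ⟨haS, 0, rfl⟩
    obtain ⟨x, hx, hx_edges⟩ :=
      ih _ ((Finset.erase_ssubset haA).trans_subset hAS) (h.descendants_erase haS)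
    obtain ⟨y, hy, hy_edges⟩ := ih _ (Finset.sdiff_ssubset hAS ⟨a, haA⟩) (h.sdiff_descendants a)
    refine ⟨Code.graft x y, (mem_codes hS).2 ⟨_, hAS, h_desc, a, haA, x, hx, y, hy, rfl⟩, ?_⟩
    rw [Code.edges, hx_edges, hy_edges, root_of_mem_codes hx, root_of_mem_codes hy,
      ← Set.image_union]
    refine (Set.image_insert_eq (f := fun u => s(u, p u))).symm.trans ?_
    rw [← Set.insert_union, ← Finset.coe_insert, Finset.insert_erase haA, ← Finset.coe_union,
      Finset.union_sdiff_of_subset hAS]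

end IsParentMap

omit [DecidableEq V] in
theorem exists_adj_dist_lt {G : SimpleGraph V} {u r : V} (h : G.Reachable u r) (hu : u ≠ r) :
    ∃ v, G.Adj u v ∧ G.dist v r < G.dist u r := by
  obtain ⟨w, hw⟩ := h.exists_walk_length_eq_dist
  cases w with
  | nil => exact absurd rfl hu
  | cons hadj w =>
    refine ⟨_, hadj, ?_⟩
    rw [← hw, SimpleGraph.Walk.length_cons]
    exact Nat.lt_succ_of_le (SimpleGraph.dist_le w)

theorem exists_isParentMap_of_isTree [Fintype V] {G : SimpleGraph V} (hG : G.IsTree) (r : V) :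
    ∃ p d, IsParentMap p d (Finset.univ.erase r) r ∧
      G.edgeSet = (fun u => s(u, p u)) '' (Finset.univ.erase r : Finset V) := by
  have h_closer (u : V) : ∃ v, (u = r → v = r) ∧
      (u ≠ r → G.Adj u v ∧ G.dist v r < G.dist u r) := by
    by_cases hu : u = r
    · exact ⟨r, fun _ => rfl, fun h => absurd hu h⟩
    · obtain ⟨v, hv⟩ := exists_adj_dist_lt (hG.connected u r) hu
      exact ⟨v, fun h => absurd h hu, fun _ => hv⟩
  choose p hp_root hp using h_closer
  have h_inj : Set.InjOn (fun u => s(u, p u)) (Finset.univ.erase r : Finset V) := by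
    intro u hu v hv huv
    have hu_lt := (hp u (Finset.ne_of_mem_erase hu)).2
    have hv_lt := (hp v (Finset.ne_of_mem_erase hv)).2
    rcases Sym2.eq_iff.1 huv with ⟨h, -⟩ | ⟨hu', hv'⟩
    · exact h
    · rw [hv'] at hu_lt
      rw [← hu'] at hv_lt
      exact absurd hu_lt hv_lt.not_gt
  refine ⟨p, fun u => G.dist u r, ⟨fun u => ?_, fun {u} _ => ?_, fun {u} hu => ?_⟩,
    (Set.eq_of_subset_of_ncard_le ?_ ?_ (Set.toFinite _)).symm⟩
  · by_cases hu : u = r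
    · rw [hp_root u hu, hu]
    · exact (hp u hu).2.le
  · rw [Finset.insert_erase (Finset.mem_univ r)]
    exact Finset.mem_univ _
  · exact (hp u (Finset.ne_of_mem_erase hu)).2
  · rintro _ ⟨u, hu, rfl⟩
    exact (hp u (Finset.ne_of_mem_erase hu)).1
  · rw [h_inj.ncard_image, Set.ncard_coe_finset, Finset.card_erase_of_mem (Finset.mem_univ r),
      Finset.card_univ]
    have h_card := (SimpleGraph.isTree_iff_connected_and_card.1 hG).2
    rw [Nat.card_eq_fintype_card (α := V)] at h_card
    rw [← h_card]
    exact (Nat.add_sub_cancel ..).ge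

theorem exists_mem_codes_of_isTree [Fintype V] {G : SimpleGraph V} (hG : G.IsTree) (r : V) :
    ∃ t ∈ codes (Finset.univ.erase r) r, t.edges = G.edgeSet := by
  obtain ⟨p, d, hp, h_edges⟩ := exists_isParentMap_of_isTree hG r
  exact h_edges ▸ hp.exists_mem_codes

omit [DecidableEq V] in
/-- The values of `g` are decreasing in the number of subtrees, so trading that number for the
number of subtrees through `r` can only increase the sum. -/
theorem sum_card_connected_le_lawSum [Fintype V] [Nonempty V] {g : ℕ → ℝ} (hg : ∀ x, 0 ≤ g x)
    (hg_anti : AntitoneOn g (Set.Ici 1)) {F : Finset (SimpleGraph V)} (hF : ∀ G ∈ F, G.IsTree) :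
    ∑ G ∈ F, g (Nat.card {S : Set V // (G.induce S).Connected}) ≤
      lawSum (Fintype.card V - 1) g := by
  classical
  obtain ⟨r⟩ := ‹Nonempty V›
  have : Nonempty (Code V) := ⟨Code.leaf r⟩
  choose! t ht_mem ht_edges using fun G hG => exists_mem_codes_of_isTree (hF G hG) r
  have h_inj : Set.InjOn t F := fun G hG H hH h =>
    SimpleGraph.edgeSet_injective (by rw [← ht_edges G hG, h, ht_edges H hH])
  have h_le : (F.image t).val ≤ codes (Finset.univ.erase r) r := by
    rw [Multiset.le_iff_subset (F.image t).nodup]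
    intro c hc
    obtain ⟨G, hG, rfl⟩ := Finset.mem_image.1 hc
    exact ht_mem G hG
  calc ∑ G ∈ F, g (Nat.card {S : Set V // (G.induce S).Connected})
    _ ≤ ∑ G ∈ F, g (t G).val := Finset.sum_le_sum fun G hG => by
      have h_proper := isProper_of_mem_codes (Finset.notMem_erase r _) (ht_mem G hG)
      have h := h_proper.val_le_card_connected (ht_edges G hG).le
      exact hg_anti (t G).val_pos ((t G).val_pos.trans_le h) h
    _ = ((F.image t).val.map fun c => g c.val).sum := by
      rw [← Finset.sum_image (f := fun c : Code V => g c.val) h_inj, Finset.sum_map_val]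
    _ ≤ ((codes (Finset.univ.erase r) r).map fun c => g c.val).sum := by
      obtain ⟨C, hC⟩ := Multiset.le_iff_exists_add.1 h_le
      rw [hC, Multiset.map_add, Multiset.sum_add]
      exact le_add_of_nonneg_right (Multiset.sum_nonneg (by simp [hg]))
    _ = lawSum (Fintype.card V - 1) g := by
      rw [sum_map_val_codes, Finset.card_erase_of_mem (Finset.mem_univ r), Finset.card_univ]

end Codes

/-! ### A lower bound for the number of labelled trees -/

section Forests

variable {W : Type*}

/-- A partial parent map without infinite ascents, that is, a rooted forest on `W` if `W` is finite.
Its roots are the vertices with value `none`. -/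
def IsForest (p : W → Option W) : Prop :=
  WellFounded fun v u => p u = some v

/-- `ρ` sends every vertex to the root of its tree in the forest `p`. -/
def IsRootMap (p : W → Option W) (ρ : W → W) : Prop :=
  ∀ u, ρ u = (p u).elim u ρ

/-- The undirected graph underlying a rooted forest. -/
def forestGraph (p : W → Option W) : SimpleGraph W :=
  SimpleGraph.fromRel fun u v => p u = some v

variable {p q : W → Option W} {ρ : W → W}

theorem IsForest.exists_isRootMap (hp : IsForest p) : ∃ ρ, IsRootMap p ρ := by
  refine ⟨hp.fix fun u ih => match h : p u with
    | none => u
    | some v => ih v h, fun u => ?_⟩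
  rw [hp.fix_eq]
  split <;> simp [*]

theorem IsRootMap.apply_of_eq_none (hρ : IsRootMap p ρ) {u : W} (hu : p u = none) : ρ u = u := by
  rw [hρ, hu, Option.elim_none]

theorem IsRootMap.apply_of_eq_some (hρ : IsRootMap p ρ) {u v : W} (huv : p u = some v) :
    ρ u = ρ v := by
  rw [hρ, huv, Option.elim_some]

theorem IsForest.map_root_eq_none (hp : IsForest p) (hρ : IsRootMap p ρ) (u : W) :
    p (ρ u) = none := by
  induction u using hp.induction with
  | _ u ih =>
    cases hu : p u with
    | none => rwa [hρ.apply_of_eq_none hu]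
    | some v => exact hρ.apply_of_eq_some hu ▸ ih v hu

theorem IsForest.update [DecidableEq W] (hp : IsForest p) (hρ : IsRootMap p ρ) {x v : W}
    (hx : p x = none) (hxv : x ≠ ρ v) : IsForest (Function.update p x (some v)) := by
  have h_acc_of_ne (u : W) (hu : ρ u ≠ x) :
      Acc (fun v' u => Function.update p x (some v) u = some v') u := by
    induction u using hp.induction with
    | _ u ih =>
      have hux : u ≠ x := fun h => hu (h ▸ hρ.apply_of_eq_none (h ▸ hx))
      refine ⟨u, fun w huw => ?_⟩
      rw [Function.update_of_ne hux] at huw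
      exact ih w huw (hρ.apply_of_eq_some huw ▸ hu)
  refine ⟨fun u => ?_⟩
  induction u using hp.induction with
  | _ u ih =>
    refine ⟨u, fun w huw => ?_⟩
    by_cases hux : u = x
    · rw [hux, Function.update_self, Option.some_inj] at huw
      exact huw ▸ h_acc_of_ne v hxv.symm
    · rw [Function.update_of_ne hux] at huw
      exact ih w huw

theorem IsForest.ne_of_eq_some (hp : IsForest p) {u v : W} (huv : p u = some v) : u ≠ v :=
  fun h => hp.asymmetric u u (h ▸ huv) (h ▸ huv)

theorem IsForest.forestGraph_adj (hp : IsForest p) {u v : W} (huv : p u = some v) :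
    (forestGraph p).Adj u v :=
  ⟨hp.ne_of_eq_some huv, Or.inl huv⟩

theorem IsForest.eq_of_forestGraph_eq (hp : IsForest p) {r : W} (hpr : ∀ u, p u = none ↔ u = r)
    (hqr : ∀ u, q u = none ↔ u = r) (h : forestGraph p = forestGraph q) : p = q := by
  funext u
  induction u using hp.induction with
  | _ u ih =>
    cases hu : p u with
    | none => exact ((hqr u).2 ((hpr u).1 hu)).symm
    | some v =>
      rcases (h ▸ hp.forestGraph_adj hu : (forestGraph q).Adj u v).2 with hq | hq
      · exact hq.symm
      · exact absurd ((ih v hu).trans hq) (hp.asymmetric v u hu)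

theorem IsForest.connected_forestGraph (hp : IsForest p) {r : W} (hr : ∀ u, p u = none → u = r) :
    (forestGraph p).Connected := by
  have h_reach (u : W) : (forestGraph p).Reachable u r := by
    induction u using hp.induction with
    | _ u ih =>
      cases hu : p u with
      | none => rw [hr u hu]
      | some v => exact (hp.forestGraph_adj hu).reachable.trans (ih v hu)
  exact
    { preconnected := fun u v => (h_reach u).trans (h_reach v).symm
      nonempty := ⟨r⟩ }

theorem edgeSet_forestGraph_subset (p : W → Option W) :
    (forestGraph p).edgeSet ⊆ (fun u => s(u, (p u).getD u)) '' {u | (p u).isSome} := by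
  have h_mem {u v : W} (huv : p u = some v) :
      s(u, v) ∈ (fun u => s(u, (p u).getD u)) '' {u | (p u).isSome} :=
    ⟨u, by simp [huv], by simp [huv]⟩
  refine Sym2.ind fun u v => ?_
  rintro ⟨-, huv | hvu⟩
  · exact h_mem huv
  · exact Sym2.eq_swap ▸ h_mem hvu

theorem IsForest.isTree_forestGraph [Finite W] (hp : IsForest p) {r : W}
    (hr : ∀ u, p u = none ↔ u = r) : (forestGraph p).IsTree := by
  have h_conn := hp.connected_forestGraph fun u => (hr u).1
  have h_roots : {u | (p u).isSome} = ({r} : Set W)ᶜ :=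
    Set.ext fun u => Option.ne_none_iff_isSome.symm.trans (hr u).not
  refine SimpleGraph.isTree_iff_connected_and_card.2
    ⟨h_conn, le_antisymm ?_ h_conn.card_vert_le_card_edgeSet_add_one⟩
  calc (forestGraph p).edgeSet.ncard + 1
    _ ≤ ({r} : Set W)ᶜ.ncard + 1 := by
      gcongr
      exact (Set.ncard_le_ncard (edgeSet_forestGraph_subset p)).trans
        (h_roots ▸ Set.ncard_image_le)
    _ = Nat.card W := by
      rw [← Set.ncard_singleton r, add_comm, Set.ncard_add_ncard_compl]

/-- The forest `q` arises from `p` by giving a parent to one of the roots of `p`. -/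
def IsExtension [DecidableEq W] (p q : W → Option W) : Prop :=
  ∃ x v, p x = none ∧ q = Function.update p x (some v)

variable [Fintype W]

/-- The vertices of a forest that have a parent; there is one edge for each of them. -/
def nonRoots (p : W → Option W) : Finset W :=
  Finset.univ.filter fun u => (p u).isSome

theorem mem_nonRoots {u : W} : u ∈ nonRoots p ↔ (p u).isSome := by
  simp [nonRoots]

theorem notMem_nonRoots {u : W} : u ∉ nonRoots p ↔ p u = none := by
  simp [nonRoots]

theorem nonRoots_update [DecidableEq W] (p : W → Option W) (x v : W) :
    nonRoots (Function.update p x (some v)) = insert x (nonRoots p) := by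
  ext u
  by_cases hu : u = x <;> simp [mem_nonRoots, hu]

variable [DecidableEq W]

open Classical in
/-- The rooted forests on the vertex set `W` with exactly `j` edges. -/
noncomputable def forests (W : Type*) [Fintype W] [DecidableEq W] (j : ℕ) :
    Finset (W → Option W) :=
  Finset.univ.filter fun p => IsForest p ∧ (nonRoots p).card = j

variable {j : ℕ}

theorem mem_forests : p ∈ forests W j ↔ IsForest p ∧ (nonRoots p).card = j := by
  simp [forests]

theorem exists_eq_none_iff_of_mem_forests [Nonempty W] (hp : p ∈ forests W (Fintype.card W - 1)) :
    ∃ r, ∀ u, p u = none ↔ u = r := by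
  have h_card : (nonRoots p)ᶜ.card = 1 := by
    rw [Finset.card_compl, (mem_forests.1 hp).2]
    have := Fintype.card_pos (α := W)
    lia
  obtain ⟨r, hr⟩ := Finset.card_eq_one.1 h_card
  exact ⟨r, fun u => by rw [← notMem_nonRoots, ← Finset.mem_compl, hr, Finset.mem_singleton]⟩

open Classical in
theorem card_mul_le_card_isExtension (hp : p ∈ forests W j) :
    Fintype.card W * (Fintype.card W - 1 - j) ≤
      ((forests W (j + 1)).filter fun q => IsExtension p q).card := by
  obtain ⟨h_forest, h_card⟩ := mem_forests.1 hp
  obtain ⟨ρ, hρ⟩ := h_forest.exists_isRootMap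
  let links : Finset (Σ _ : W, W) := Finset.univ.sigma fun v => (nonRoots p)ᶜ.erase (ρ v)
  have mem_links {e : Σ _ : W, W} : e ∈ links ↔ p e.2 = none ∧ e.2 ≠ ρ e.1 := by
    simp only [links, Finset.mem_sigma, Finset.mem_univ, Finset.mem_erase, Finset.mem_compl,
      notMem_nonRoots, true_and, and_comm]
  have card_links : links.card = Fintype.card W * (Fintype.card W - 1 - j) := by
    rw [Finset.card_sigma]
    refine Finset.sum_const_nat fun v _ => ?_
    have hv : ρ v ∈ (nonRoots p)ᶜ :=
      Finset.mem_compl.2 (notMem_nonRoots.2 (h_forest.map_root_eq_none hρ v))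
    rw [Finset.card_erase_of_mem hv, Finset.card_compl, h_card, Nat.sub_right_comm]
  rw [← card_links]
  refine Finset.card_le_card_of_injOn (fun e => Function.update p e.2 (some e.1)) ?_ ?_
  · intro e he
    obtain ⟨hx, hxv⟩ := mem_links.1 he
    refine Finset.mem_filter.2 ⟨mem_forests.2 ⟨h_forest.update hρ hx hxv, ?_⟩, e.2, e.1, hx, rfl⟩
    rw [nonRoots_update, Finset.card_insert_of_notMem (notMem_nonRoots.2 hx), h_card]
  · rintro ⟨v, x⟩ he ⟨v', x'⟩ he' h
    have hx : p x = none := (mem_links.1 he).1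
    have hxx' : x = x' := by
      by_contra hne
      simpa [Function.update_of_ne hne, hx] using congrFun h x
    subst hxx'
    simpa using congrFun h x

open Classical in
theorem card_isExtension_le (hq : q ∈ forests W (j + 1)) :
    ((forests W j).filter fun p => IsExtension p q).card ≤ j + 1 := by
  rw [← (mem_forests.1 hq).2]
  refine (Finset.card_le_card fun p hp => ?_).trans
    (Finset.card_image_le (f := fun x => Function.update q x none))
  obtain ⟨-, x, v, hx, rfl⟩ := Finset.mem_filter.1 hp
  refine Finset.mem_image.2 ⟨x, by simp [mem_nonRoots], ?_⟩
  rw [Function.update_idem, ← hx, Function.update_eq_self]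

/-- Pitman's double counting of the pairs of a forest and an extension of it. -/
theorem card_forests_mul_le (W : Type*) [Fintype W] [DecidableEq W] (j : ℕ) :
    (forests W j).card * (Fintype.card W * (Fintype.card W - 1 - j)) ≤
      (forests W (j + 1)).card * (j + 1) := by
  classical
  exact Finset.card_mul_le_card_mul IsExtension (fun p hp => card_mul_le_card_isExtension hp)
    fun q hq => card_isExtension_le hq

theorem choose_mul_pow_le_card_forests (W : Type*) [Fintype W] [DecidableEq W] (j : ℕ) :
    (Fintype.card W - 1).choose j * Fintype.card W ^ j ≤ (forests W j).card := by
  induction j with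
  | zero =>
    rw [Nat.choose_zero_right, pow_zero, mul_one, Nat.one_le_iff_ne_zero, Finset.card_ne_zero]
    refine ⟨fun _ => none, mem_forests.2 ⟨⟨fun u => ⟨u, ?_⟩⟩, ?_⟩⟩ <;> simp [nonRoots]
  | succ j ih =>
    refine Nat.le_of_mul_le_mul_right ?_ (Nat.succ_pos j)
    set n := Fintype.card W
    calc (n - 1).choose (j + 1) * n ^ (j + 1) * (j + 1)
      _ = (n - 1).choose (j + 1) * (j + 1) * n ^ (j + 1) := by ring
      _ = (n - 1).choose j * n ^ j * (n * (n - 1 - j)) := by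
        rw [Nat.choose_succ_right_eq]
        ring
      _ ≤ (forests W j).card * (n * (n - 1 - j)) := Nat.mul_le_mul_right _ ih
      _ ≤ (forests W (j + 1)).card * (j + 1) := card_forests_mul_le W j

/-- One half of Cayley's formula: a rooted tree is determined by its root and its underlying
graph. -/
theorem pow_le_card_mul_card_isTree (W : Type*) [Fintype W] [Nonempty W] :
    Fintype.card W ^ (Fintype.card W - 1) ≤
      Fintype.card W * Nat.card {G : SimpleGraph W // G.IsTree} := by
  classical
  have h := choose_mul_pow_le_card_forests W (Fintype.card W - 1)
  rw [Nat.choose_self, one_mul] at h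
  choose r hr using fun p : forests W (Fintype.card W - 1) =>
    exists_eq_none_iff_of_mem_forests p.2
  have h_forest (p : forests W (Fintype.card W - 1)) : IsForest p.1 := (mem_forests.1 p.2).1
  let rootedTree (p : forests W (Fintype.card W - 1)) : W × {G : SimpleGraph W // G.IsTree} :=
    (r p, ⟨forestGraph p.1, (h_forest p).isTree_forestGraph (hr p)⟩)
  have h_inj : Function.Injective rootedTree := by
    intro p q hpq
    obtain ⟨h_root, h_graph⟩ := Prod.mk.inj hpq
    exact Subtype.ext ((h_forest p).eq_of_forestGraph_eq (hr p) (h_root ▸ hr q)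
      (congrArg Subtype.val h_graph))
  calc Fintype.card W ^ (Fintype.card W - 1)
    _ ≤ Nat.card (forests W (Fintype.card W - 1)) := by rwa [Nat.card_eq_finsetCard]
    _ ≤ Nat.card (W × {G : SimpleGraph W // G.IsTree}) := Nat.card_le_card_of_injective _ h_inj
    _ = Fintype.card W * Nat.card {G : SimpleGraph W // G.IsTree} := by
      rw [Nat.card_prod, Nat.card_eq_fintype_card]

theorem card_isTree_pos (W : Type*) [Finite W] [Nonempty W] :
    0 < Nat.card {G : SimpleGraph W // G.IsTree} := by
  obtain ⟨G, -, hG⟩ := (SimpleGraph.connected_top (V := W)).exists_isTree_le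
  have : Nonempty {G : SimpleGraph W // G.IsTree} := ⟨⟨G, hG⟩⟩
  exact Nat.card_pos

end Forests

/-! ### Proportion of trees with few subtrees -/

/-- Markov's inequality for the moment of order `-s`. -/
theorem card_isTree_and_lt_mul_rpow_le (V : Type*) [Fintype V] [Nonempty V] {s : ℝ} (hs : 0 ≤ s)
    (t : ℝ) :
    (Nat.card {G : SimpleGraph V //
      G.IsTree ∧ (Nat.card {S : Set V // (G.induce S).Connected} : ℝ) < t} : ℝ) * t ^ (-s) ≤
      lawSum (Fintype.card V - 1) fun x => (x : ℝ) ^ (-s) := by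
  classical
  set F : Finset (SimpleGraph V) := {G | G.IsTree ∧
    (Nat.card {S : Set V // (G.induce S).Connected} : ℝ) < t} with hF
  have hF_tree (G) (hG : G ∈ F) : G.IsTree := (Finset.mem_filter.1 hG).2.1
  have h_anti : AntitoneOn (fun x : ℕ => (x : ℝ) ^ (-s)) (Set.Ici 1) := fun x hx y _ hxy =>
    Real.rpow_le_rpow_of_nonpos (Nat.cast_pos.2 hx) (Nat.cast_le.2 hxy) (neg_nonpos.2 hs)
  rw [Nat.card_eq_fintype_card, Fintype.card_subtype, ← hF, ← nsmul_eq_mul]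
  refine (Finset.card_nsmul_le_sum F _ _ fun G hG => ?_).trans
    (sum_card_connected_le_lawSum (fun x => by positivity) h_anti hF_tree)
  have h_card : 0 < Nat.card {S : Set V // (G.induce S).Connected} :=
    have h_univ := G.induceUnivIso.connected_iff.2 (hF_tree G hG).connected
    Nat.card_pos_iff.2 ⟨⟨Set.univ, h_univ⟩, inferInstance⟩
  exact Real.rpow_le_rpow_of_nonpos (Nat.cast_pos.2 h_card) (Finset.mem_filter.1 hG).2.2.le
    (neg_nonpos.2 hs)

theorem eventually_factorial_le :
    ∀ᶠ n : ℕ in atTop, (n.factorial : ℝ) ≤ 4 * n * (n / Real.exp 1) ^ n := by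
  have hpi : √Real.pi < 2 := by
    rw [Real.sqrt_lt' two_pos]
    linarith [Real.pi_lt_four]
  filter_upwards [Stirling.tendsto_stirlingSeq_sqrt_pi.eventually_lt_const hpi,
    eventually_ge_atTop 1] with n hn hn₁
  have hn₁ : (1 : ℝ) ≤ n := by exact_mod_cast hn₁
  rw [Stirling.stirlingSeq, div_lt_iff₀ (by positivity)] at hn
  have h_sqrt : √(2 * n : ℝ) ≤ 2 * n := by
    rw [Real.sqrt_le_left (by positivity)]
    nlinarith
  calc (n.factorial : ℝ) ≤ 2 * (√(2 * n : ℝ) * (n / Real.exp 1) ^ n) := hn.le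
    _ ≤ 2 * (2 * n * (n / Real.exp 1) ^ n) := by gcongr
    _ = 4 * n * (n / Real.exp 1) ^ n := by ring

theorem eventually_factorial_div_card_isTree_le : ∀ᶠ n : ℕ in atTop,
    ((n - 1).factorial : ℝ) / Nat.card {G : SimpleGraph (Fin n) // G.IsTree} ≤
      4 * n ^ 2 / Real.exp n := by
  filter_upwards [eventually_factorial_le, eventually_ge_atTop 1] with n hn hn₁
  obtain ⟨n, rfl⟩ := Nat.exists_eq_add_of_le' hn₁
  set T := Nat.card {G : SimpleGraph (Fin (n + 1)) // G.IsTree}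
  have hT : (0 : ℝ) < T := by exact_mod_cast card_isTree_pos (Fin (n + 1))
  have h_cayley : ((n + 1 : ℕ) : ℝ) ^ n ≤ (n + 1 : ℕ) * T := by
    exact_mod_cast Fintype.card_fin (n + 1) ▸ pow_le_card_mul_card_isTree (Fin (n + 1))
  rw [Nat.add_sub_cancel, div_le_div_iff₀ hT (Real.exp_pos _)]
  rw [div_pow, ← Real.exp_nat_mul, mul_one, Nat.factorial_succ, Nat.cast_mul, mul_div_assoc',
    le_div_iff₀ (Real.exp_pos _)] at hn
  have hn₀ : (0 : ℝ) < (n + 1 : ℕ) := by positivity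
  refine le_of_mul_le_mul_left ?_ hn₀
  calc ((n + 1 : ℕ) : ℝ) * (n.factorial * Real.exp (n + 1 : ℕ))
      ≤ 4 * (n + 1 : ℕ) * ((n + 1 : ℕ) : ℝ) ^ (n + 1) := by rwa [← mul_assoc]
    _ = 4 * (n + 1 : ℕ) ^ 2 * ((n + 1 : ℕ) : ℝ) ^ n := by ring
    _ ≤ 4 * (n + 1 : ℕ) ^ 2 * ((n + 1 : ℕ) * T) := by gcongr
    _ = (n + 1 : ℕ) * (4 * (n + 1 : ℕ) ^ 2 * T) := by ring

theorem treeProb_lt_le {b c s : ℝ} (hb : 0 < b) (hs : 0 ≤ s)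
    (hmean : ∀ n : ℕ, mean n (fun x => (x : ℝ) ^ (-s)) ≤ Real.exp ((1 - s * c) * (n + 1))) {n : ℕ}
    (hn : 1 ≤ n) : treeProb n (fun G => (subtreeCount G : ℝ) < b ^ n) ≤
      (n - 1).factorial / Nat.card {G : SimpleGraph (Fin n) // G.IsTree} *
        Real.exp ((1 - s * (c - Real.log b)) * n) := by
  obtain ⟨n, rfl⟩ := Nat.exists_eq_add_of_le' hn
  have h_markov := card_isTree_and_lt_mul_rpow_le (Fin (n + 1)) hs (b ^ (n + 1))
  have h_sum : (lawSum n fun x => (x : ℝ) ^ (-s)) ≤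
      n.factorial * Real.exp ((1 - s * c) * (n + 1)) := by
    have := hmean n
    rwa [mean, div_le_iff₀' (by positivity)] at this
  have h_rpow : ((b ^ (n + 1) : ℝ)) ^ (-s) = Real.exp (-(s * Real.log b * (n + 1))) := by
    rw [Real.rpow_def_of_pos (by positivity), Real.log_pow]
    push_cast
    ring_nf
  rw [Fintype.card_fin, Nat.add_sub_cancel, h_rpow, Real.exp_neg, ← div_eq_mul_inv,
    div_le_iff₀ (Real.exp_pos _)] at h_markov
  rw [treeProb, div_mul_eq_mul_div, Nat.add_sub_cancel]
  gcongr
  calc _ ≤ _ := h_markov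
    _ ≤ n.factorial * Real.exp ((1 - s * c) * (n + 1)) * Real.exp (s * Real.log b * (n + 1)) := by
      gcongr
    _ = n.factorial * Real.exp ((1 - s * (c - Real.log b)) * (n + 1 : ℕ)) := by
      rw [mul_assoc, ← Real.exp_add]
      push_cast
      ring_nf

theorem tendsto_treeProb_lt {b c s : ℝ} (hb : 0 < b) (hbc : Real.log b < c) (hs : 0 < s)
    (hmean : ∀ n : ℕ, mean n (fun x => (x : ℝ) ^ (-s)) ≤ Real.exp ((1 - s * c) * (n + 1))) :
    Tendsto (fun n => treeProb n fun G => (subtreeCount G : ℝ) < b ^ n) atTop (𝓝 0) := by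
  set δ := s * (c - Real.log b)
  have hδ : Real.exp (-δ) < 1 :=
    Real.exp_lt_one_iff.2 (neg_neg_iff_pos.2 (mul_pos hs (sub_pos.2 hbc)))
  have h_lim : Tendsto (fun n : ℕ => 4 * ((n : ℝ) ^ 2 * Real.exp (-δ) ^ n)) atTop (𝓝 0) := by
    simpa using (tendsto_pow_const_mul_const_pow_of_abs_lt_one 2
      (by rwa [Real.abs_exp] : |Real.exp (-δ)| < 1)).const_mul 4
  refine squeeze_zero' (.of_forall fun n => div_nonneg (Nat.cast_nonneg _) (Nat.cast_nonneg _)) ?_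
    h_lim
  filter_upwards [eventually_factorial_div_card_isTree_le, eventually_ge_atTop 1] with n h_tree hn
  calc _ ≤ (n - 1).factorial / Nat.card {G : SimpleGraph (Fin n) // G.IsTree} *
        Real.exp ((1 - δ) * n) := treeProb_lt_le hb hs.le hmean hn
    _ ≤ 4 * n ^ 2 / Real.exp n * Real.exp ((1 - δ) * n) := by gcongr
    _ = 4 * (n ^ 2 * Real.exp (-δ) ^ n) := by
      rw [show (1 - δ) * n = n + n * -δ by ring, Real.exp_add, ← Real.exp_nat_mul]
      field_simp

theorem treeProb_add_treeProb_not {n : ℕ} (hn : n ≠ 0) (p : SimpleGraph (Fin n) → Prop) :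
    treeProb n p + treeProb n (fun G => ¬ p G) = 1 := by
  classical
  have : NeZero n := ⟨hn⟩
  have hT : (Nat.card {G : SimpleGraph (Fin n) // G.IsTree} : ℝ) ≠ 0 := by
    exact_mod_cast (card_isTree_pos (Fin n)).ne'
  rw [treeProb, treeProb, ← add_div, div_eq_one_iff_eq hT, ← Nat.cast_add]
  simp only [Nat.card_eq_fintype_card, Fintype.card_subtype]
  rw [← Finset.filter_filter, ← Finset.filter_filter, Finset.card_filter_add_card_filter_not]

theorem tendsto_treeProb_pow_le {b : ℝ} (hb : 0 < b) {k : ℕ}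
    (h_log : Real.log b < ∑ n ∈ Finset.range k,
      mean n (fun x => Real.log (1 + (x : ℝ)⁻¹)) * Real.exp (-1) ^ (n + 1)) :
    Tendsto (fun n => treeProb n fun G => b ^ n ≤ (subtreeCount G : ℝ)) atTop (𝓝 1) := by
  obtain ⟨c, hbc, hc⟩ := exists_between h_log
  obtain ⟨s, hs, hmean⟩ := exists_mean_rpow_neg_le hc
  have h_few := (tendsto_treeProb_lt hb hbc hs hmean).const_sub 1
  rw [sub_zero] at h_few
  refine h_few.congr' ?_
  filter_upwards [eventually_ne_atTop 0] with n hn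
  simp only [← treeProb_add_treeProb_not hn fun G => b ^ n ≤ (subtreeCount G : ℝ), not_le,
    add_sub_cancel_right]

end SubtreeBound

/-- A.a.s. the number of subtrees of a uniformly random labelled tree on `n` vertices
is at least `1.41805 ^ n`. -/
theorem aas_subtree_lower_bound_141805 :
    Tendsto (fun n : ℕ =>
      treeProb n (fun G => (1.41805 : ℝ) ^ n ≤ (subtreeCount G : ℝ)))
      atTop (𝓝 1) :=
  SubtreeBound.tendsto_treeProb_pow_le (by norm_num)
    (SubtreeBound.log_141805_lt.trans SubtreeBound.lt_sum_mean_log)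
end
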